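/- Main theorem: the Böhm preorder ⊑B, the black type preorder ⊑•type, and the interaction preorder ⊑int coincide on λ-terms; consequently the λ-theories induced by Böhm-tree equality, black type equivalence, and interaction equivalence ≡int coincide. -/

import Mathlib

set_option autoImplicit false

/-! ### Players -/

inductive Player : Type
  | white
  | black
deriving DecidableEq

/-- The opposite player. -/
def Player.op : Player → Player
  | .white => .black
  | .black => .white

/-- `gamma p q` is `0` if the players agree (silent) and `1` otherwise (interaction). -/
def Player.gamma (p q : Player) : ℕ := if p = q then 0 else 1

/-! ### Ordinary λ-terms (de Bruijn representation) -/

inductive Lam : Type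
  | var : ℕ → Lam
  | lam : Lam → Lam
  | app : Lam → Lam → Lam
deriving DecidableEq

namespace Lam

/-- Shift the free de Bruijn indices ≥ `d` by one. -/
def liftAt : Lam → ℕ → Lam
  | .var n, d => .var (if n < d then n else n + 1)
  | .lam t, d => .lam (t.liftAt (d + 1))
  | .app t u, d => .app (t.liftAt d) (u.liftAt d)

/-- Capture-avoiding substitution of `u` for the de Bruijn index `x`. -/
def subst : Lam → ℕ → Lam → Lam
  | .var n, x, u => if n = x then u else if x < n then .var (n - 1) else .var n
  | .lam t, x, u => .lam (t.subst (x + 1) (u.liftAt 0))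
  | .app t s, x, u => .app (t.subst x u) (s.subst x u)

end Lam

/-- Root β-rule: `(λx.t) u ↦ t[x:=u]`. -/
inductive LBetaRoot : Lam → Lam → Prop
  | beta (t u : Lam) : LBetaRoot (.app (.lam t) u) (t.subst 0 u)

/-- Root η-rule: `λx. t x ↦ t` with `x ∉ FV(t)` (enforced by the lifting). -/
inductive LEtaRoot : Lam → Lam → Prop
  | eta (t : Lam) : LEtaRoot (.lam (.app (t.liftAt 0) (.var 0))) t

/-- Closure of a root relation under all contexts. -/
inductive LFull (R : Lam → Lam → Prop) : Lam → Lam → Prop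
  | root {t u : Lam} : R t u → LFull R t u
  | lam {t u : Lam} : LFull R t u → LFull R (.lam t) (.lam u)
  | appL {t t' : Lam} (u : Lam) : LFull R t t' → LFull R (.app t u) (.app t' u)
  | appR (t : Lam) {u u' : Lam} : LFull R u u' → LFull R (.app t u) (.app t u')

/-- Closure under applicative spine contexts `⟨·⟩ t1 … tk`. -/
inductive LSpine (R : Lam → Lam → Prop) : Lam → Lam → Prop
  | root {t u : Lam} : R t u → LSpine R t u
  | appL {t t' : Lam} (u : Lam) : LSpine R t t' → LSpine R (.app t u) (.app t' u)

/-- Closure under head contexts `λx1…xn.⟨·⟩ t1 … tk`. -/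
inductive LHead (R : Lam → Lam → Prop) : Lam → Lam → Prop
  | spine {t u : Lam} : LSpine R t u → LHead R t u
  | lam {t u : Lam} : LHead R t u → LHead R (.lam t) (.lam u)

/-- β-reduction. -/
def LBeta : Lam → Lam → Prop := LFull LBetaRoot
/-- η-reduction. -/
def LEta : Lam → Lam → Prop := LFull LEtaRoot
/-- Head reduction. -/
def LHStep : Lam → Lam → Prop := LHead LBetaRoot
/-- Multistep head reduction. -/
def LHSteps : Lam → Lam → Prop := Relation.ReflTransGen LHStep

/-- β-conversion (reflexive-symmetric-transitive closure of β-reduction). -/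
def LBetaConv : Lam → Lam → Prop :=
  Relation.ReflTransGen (fun a b => LBeta a b ∨ LBeta b a)
/-- η-conversion. -/
def LEtaConv : Lam → Lam → Prop :=
  Relation.ReflTransGen (fun a b => LEta a b ∨ LEta b a)

/-- Head normal forms: no head step out of `t`. -/
def Lam.LHNF (t : Lam) : Prop := ∀ u, ¬ LHStep t u

/-- Head convergence: `t ⇓h`. -/
def Lam.HConv (t : Lam) : Prop := ∃ h, LHSteps t h ∧ h.LHNF

/-- Ordinary contexts (one hole). -/
inductive LCtx : Type
  | hole : LCtx
  | lam : LCtx → LCtx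
  | appL : LCtx → Lam → LCtx
  | appR : Lam → LCtx → LCtx

/-- Plugging (allowing variable capture). -/
def LCtx.fill : LCtx → Lam → Lam
  | .hole, t => t
  | .lam C, t => .lam (C.fill t)
  | .appL C u, t => .app (C.fill t) u
  | .appR s C, t => .app s (C.fill t)

/-- Head contextual preorder on λ-terms. -/
def CtxLe (t u : Lam) : Prop := ∀ C : LCtx, (C.fill t).HConv → (C.fill u).HConv

/-! ### Checkers terms -/

inductive CTerm : Type
  | var : ℕ → CTerm
  | lam : Player → CTerm → CTerm
  | app : Player → CTerm → CTerm → CTerm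
deriving DecidableEq

namespace CTerm

/-- Shift the free de Bruijn indices ≥ `d` by one. -/
def liftAt : CTerm → ℕ → CTerm
  | .var n, d => .var (if n < d then n else n + 1)
  | .lam p t, d => .lam p (t.liftAt (d + 1))
  | .app p t u, d => .app p (t.liftAt d) (u.liftAt d)

/-- Capture-avoiding substitution of `u` for the de Bruijn index `x`. -/
def subst : CTerm → ℕ → CTerm → CTerm
  | .var n, x, u => if n = x then u else if x < n then .var (n - 1) else .var n
  | .lam p t, x, u => .lam p (t.subst (x + 1) (u.liftAt 0))
  | .app p t s, x, u => .app p (t.subst x u) (s.subst x u)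

/-- The underlying ordinary λ-term of a checkers term. -/
def untag : CTerm → Lam
  | .var n => .var n
  | .lam _ t => .lam t.untag
  | .app _ t u => .app t.untag u.untag

end CTerm

/-- Player lifting: tag every abstraction and application with player `p`. -/
def Lam.tag : Lam → Player → CTerm
  | .var n, _ => .var n
  | .lam t, p => .lam p (t.tag p)
  | .app t u, p => .app p (t.tag p) (u.tag p)

/-- Silent β root rule: the abstraction and the application carry the same player. -/
inductive SilentRoot : CTerm → CTerm → Prop
  | beta (p : Player) (t u : CTerm) : SilentRoot (.app p (.lam p t) u) (t.subst 0 u)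

/-- Interaction β root rule: the application carries the opposite player of the abstraction. -/
inductive InterRoot : CTerm → CTerm → Prop
  | beta (p : Player) (t u : CTerm) : InterRoot (.app p.op (.lam p t) u) (t.subst 0 u)

/-- Closure of a root relation under all checkers contexts. -/
inductive CFull (R : CTerm → CTerm → Prop) : CTerm → CTerm → Prop
  | root {t u : CTerm} : R t u → CFull R t u
  | lam (p : Player) {t u : CTerm} : CFull R t u → CFull R (.lam p t) (.lam p u)
  | appL (p : Player) {t t' : CTerm} (u : CTerm) : CFull R t t' → CFull R (.app p t u) (.app p t' u)
  | appR (p : Player) (t : CTerm) {u u' : CTerm} : CFull R u u' → CFull R (.app p t u) (.app p t u')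

/-- Closure under applicative spine contexts `⟨·⟩ @_{q1} t1 … @_{qk} tk`. -/
inductive CSpine (R : CTerm → CTerm → Prop) : CTerm → CTerm → Prop
  | root {t u : CTerm} : R t u → CSpine R t u
  | appL (p : Player) {t t' : CTerm} (u : CTerm) : CSpine R t t' → CSpine R (.app p t u) (.app p t' u)

/-- Closure under checkers head contexts `λ_{p1}x1…λ_{pn}xn.⟨·⟩ @_{q1} t1 … @_{qk} tk`. -/
inductive CHead (R : CTerm → CTerm → Prop) : CTerm → CTerm → Prop
  | spine {t u : CTerm} : CSpine R t u → CHead R t u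
  | lam (p : Player) {t u : CTerm} : CHead R t u → CHead R (.lam p t) (.lam p u)

/-- Silent β-reduction `→τ`. -/
def StepTau : CTerm → CTerm → Prop := CFull SilentRoot
/-- Interaction β-reduction `→⊛`. -/
def StepInt : CTerm → CTerm → Prop := CFull InterRoot
/-- Checkers β-reduction `→βch`. -/
def StepBch (t u : CTerm) : Prop := StepTau t u ∨ StepInt t u

/-- Silent head reduction `→hτ`. -/
def HStepTau : CTerm → CTerm → Prop := CHead SilentRoot
/-- Interaction head reduction `→h⊛`. -/
def HStepInt : CTerm → CTerm → Prop := CHead InterRoot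
/-- Checkers head reduction `→hch`. -/
def HStepCh (t u : CTerm) : Prop := HStepTau t u ∨ HStepInt t u

/-- Checkers head normal form. -/
def CTerm.HNF (t : CTerm) : Prop := ∀ u, ¬ HStepCh t u

/-- `BigStep t k` means `t ⇓^k`: the (deterministic) checkers head evaluation of `t`
terminates and performs exactly `k` interaction steps. -/
inductive BigStep : CTerm → ℕ → Prop
  | nf {t : CTerm} : t.HNF → BigStep t 0
  | silent {t u : CTerm} {k : ℕ} : HStepTau t u → BigStep u k → BigStep t k
  | inter {t u : CTerm} {k : ℕ} : HStepInt t u → BigStep u k → BigStep t (k + 1)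

/-- `HRed t n i u`: a checkers head reduction sequence from `t` to `u` of length `n`
containing exactly `i` interaction steps. -/
inductive HRed : CTerm → ℕ → ℕ → CTerm → Prop
  | refl (t : CTerm) : HRed t 0 0 t
  | silent {t u s : CTerm} {n i : ℕ} : HStepTau t u → HRed u n i s → HRed t (n + 1) i s
  | inter {t u s : CTerm} {n i : ℕ} : HStepInt t u → HRed u n i s → HRed t (n + 1) (i + 1) s

/-- Checkers contexts (one hole). -/
inductive CCtx : Type
  | hole : CCtx
  | lam : Player → CCtx → CCtx
  | appL : Player → CCtx → CTerm → CCtx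
  | appR : Player → CTerm → CCtx → CCtx

/-- Plugging (allowing variable capture). -/
def CCtx.fill : CCtx → CTerm → CTerm
  | .hole, t => t
  | .lam p C, t => .lam p (C.fill t)
  | .appL p C u, t => .app p (C.fill t) u
  | .appR p s C, t => .app p s (C.fill t)

/-- Player lifting of ordinary contexts. -/
def LCtx.tag : LCtx → Player → CCtx
  | .hole, _ => .hole
  | .lam C, p => .lam p (C.tag p)
  | .appL C u, p => .appL p (C.tag p) (u.tag p)
  | .appR s C, p => .appR p (s.tag p) (C.tag p)

/-- Checkers interaction preorder `≼ctx⊛` on checkers terms. -/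
def IntCtxLe (t u : CTerm) : Prop :=
  ∀ (C : CCtx) (k : ℕ), BigStep (C.fill t) k → BigStep (C.fill u) k

/-- Checkers interaction improvement `≼imp⊛` on checkers terms. -/
def ImpCtxLe (t u : CTerm) : Prop :=
  ∀ (C : CCtx) (k : ℕ), BigStep (C.fill t) k → ∃ k', k' ≤ k ∧ BigStep (C.fill u) k'

/-- Interaction preorder `⊑int` on ordinary λ-terms, via black lifting. -/
def IntLe (t u : Lam) : Prop := IntCtxLe (t.tag .black) (u.tag .black)

/-- Interaction improvement `⊑int·imp` on ordinary λ-terms, via black lifting. -/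
def ImpLe (t u : Lam) : Prop := ImpCtxLe (t.tag .black) (u.tag .black)

/-- Interaction equivalence `≡int`. -/
def IntEq (t u : Lam) : Prop := IntLe t u ∧ IntLe u t

/-- Silent conversion `=τ`: reflexive-symmetric-transitive closure of `→τ`. -/
def SilentConv : CTerm → CTerm → Prop :=
  Relation.ReflTransGen (fun a b => StepTau a b ∨ StepTau b a)


/-! ### Checkers multi types -/

/-- Linear types: an atom `X` and arrows `M →_{p,q} L`, where a multi type `M`
is a finite multiset of linear types (syntactically represented as a list). -/
inductive LType : Type
  | atom : LType
  | arrow : List LType → Player → Player → LType → LType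

/-- Type environments: a multi type for every de Bruijn index. -/
abbrev TEnv : Type := ℕ → Multiset LType

/-- The empty type environment. -/
def TEnv.zero : TEnv := fun _ => 0

/-- Pointwise multiset union of type environments. -/
def TEnv.add (Γ Δ : TEnv) : TEnv := fun n => Γ n + Δ n

/-- The environment assigning `[L]` to `x` and `0` elsewhere. -/
def TEnv.single (x : ℕ) (L : LType) : TEnv := fun n => if n = x then {L} else 0

/-- Extend an environment with a multi type for the freshly bound de Bruijn index `0`. -/
def TEnv.cons (M : Multiset LType) (Γ : TEnv) : TEnv := fun n =>
  match n with
  | 0 => M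
  | n + 1 => Γ n

mutual
  /-- Type derivations `π ▷ Γ ⊢^k t : L` of the checkers multi type system. -/
  inductive Deriv : TEnv → ℕ → CTerm → LType → Type
    | ax (x : ℕ) (L : LType) : Deriv (TEnv.single x L) 0 (.var x) L
    | lam {Γ : TEnv} {k : ℕ} {t : CTerm} {L : LType} (p q : Player) (M : List LType) :
        Deriv (TEnv.cons (Multiset.ofList M) Γ) k t L →
        Deriv Γ k (.lam p t) (.arrow M p q L)
    | app {Γ Δ : TEnv} {k₁ k₂ : ℕ} {t u : CTerm} {M : List LType} {p q : Player} {L : LType} :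
        Deriv Γ k₁ t (.arrow M p q L) → DerivM Δ k₂ u M →
        Deriv (TEnv.add Γ Δ) (k₁ + k₂ + Player.gamma p q) (.app q t u) L
  /-- Derivations `Γ ⊢^k t : M` of a multi type (the `many` rule). -/
  inductive DerivM : TEnv → ℕ → CTerm → List LType → Type
    | nil (t : CTerm) : DerivM TEnv.zero 0 t []
    | cons {Γ Δ : TEnv} {k k' : ℕ} {t : CTerm} {L : LType} {M : List LType} :
        Deriv Γ k t L → DerivM Δ k' t M → DerivM (TEnv.add Γ Δ) (k + k') t (L :: M)
end

mutual
  /-- The (applicative) size `|π|` of a derivation: its number of `@` rules. -/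
  def Deriv.size {Γ : TEnv} {k : ℕ} {t : CTerm} {L : LType} : Deriv Γ k t L → ℕ
    | .ax _ _ => 0
    | .lam _ _ _ π => Deriv.size π
    | .app π μ => Deriv.size π + DerivM.size μ + 1
  /-- Size of a multi-type derivation. -/
  def DerivM.size {Γ : TEnv} {k : ℕ} {t : CTerm} {M : List LType} : DerivM Γ k t M → ℕ
    | .nil _ => 0
    | .cons π μ => Deriv.size π + DerivM.size μ
end

/-- Typability `Γ ⊢^k t : L`. -/
def TJ (Γ : TEnv) (k : ℕ) (t : CTerm) (L : LType) : Prop := Nonempty (Deriv Γ k t L)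

/-- Checkers relational interpretation `⟦t⟧⊛ = {(Γ, k, L) | Γ ⊢^k t : L}`. -/
def CSem (t : CTerm) : Set (TEnv × ℕ × LType) := {x | TJ x.1 x.2.1 t x.2.2}

/-- Black type preorder `⊑•type` on ordinary λ-terms. -/
def BTypeLe (t u : Lam) : Prop := CSem (t.tag .black) ⊆ CSem (u.tag .black)

/-! ### Tight typings -/

/-- All arrows occurring in a linear type are silent (`p = q`). -/
inductive AllSilent : LType → Prop
  | atom : AllSilent .atom
  | arrow {M : List LType} {p : Player} {L : LType} :
      (∀ L' ∈ M, AllSilent L') → AllSilent L → AllSilent (.arrow M p p L)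

/-- The number of nonempty multi types occurring in a linear type. -/
def LType.neCount : LType → ℕ
  | .atom => 0
  | .arrow M _ _ L =>
      min M.length 1 + (M.attach.map fun x => LType.neCount x.1).sum + LType.neCount L
decreasing_by
  · have := List.sizeOf_lt_of_mem x.2
    simp only [LType.arrow.sizeOf_spec]
    omega
  · simp only [LType.arrow.sizeOf_spec]
    omega

/-- The number of nonempty multi types occurring in a multi type (counting itself). -/
def mNeCount (m : Multiset LType) : ℕ :=
  min (Multiset.card m) 1 + (m.map LType.neCount).sum

/-- A typing `(Γ, L)` is tight when all the multi types occurring in `Γ` and `L`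
are empty except for exactly one, and all arrows occurring in `(Γ, L)` are silent. -/
def Tight (Γ : TEnv) (L : LType) : Prop :=
  AllSilent L ∧ (∀ n : ℕ, ∀ L' ∈ Γ n, AllSilent L') ∧
    ∃ S : Finset ℕ, (∀ n : ℕ, n ∉ S → Γ n = 0) ∧
      (∑ n ∈ S, mNeCount (Γ n)) + LType.neCount L = 1

/-! ### Böhm preorders -/

/-- `n` abstractions in front of a term. -/
def Lam.absN : ℕ → Lam → Lam
  | 0, t => t
  | n + 1, t => .lam (Lam.absN n t)

/-- Left-nested application of a term to a list of arguments. -/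
def Lam.appList : Lam → List Lam → Lam
  | t, [] => t
  | t, u :: us => Lam.appList (.app t u) us

/-- One unfolding of the Böhm preorder clauses. -/
def BohmClause (R : Lam → Lam → Prop) (t u : Lam) : Prop :=
  (¬ t.HConv) ∨
    ∃ (n y : ℕ) (ts us : List Lam),
      ts.length = us.length ∧
      LHSteps t (Lam.absN n (Lam.appList (.var y) ts)) ∧
      LHSteps u (Lam.absN n (Lam.appList (.var y) us)) ∧
      ∀ (i : ℕ) (hi : i < ts.length) (hj : i < us.length), R (ts.get ⟨i, hi⟩) (us.get ⟨i, hj⟩)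

/-- The Böhm preorder `⊑B`: the largest relation closed under the clauses. -/
def BohmLe (t u : Lam) : Prop :=
  ∃ R : Lam → Lam → Prop, (∀ a b, R a b → BohmClause R a b) ∧ R t u

/-- One unfolding of the extensional Böhm preorder clauses. -/
def BohmEtaClause (R : Lam → Lam → Prop) (t u : Lam) : Prop :=
  (¬ t.HConv) ∨
    ∃ (n y : ℕ) (ts us : List Lam) (h h' : Lam),
      ts.length = us.length ∧
      LHSteps t h ∧ h.LHNF ∧ LEtaConv h (Lam.absN n (Lam.appList (.var y) ts)) ∧
      LHSteps u h' ∧ h'.LHNF ∧ LEtaConv h' (Lam.absN n (Lam.appList (.var y) us)) ∧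
      ∀ (i : ℕ) (hi : i < ts.length) (hj : i < us.length), R (ts.get ⟨i, hi⟩) (us.get ⟨i, hj⟩)

/-- The extensional Böhm preorder `⊑Bλη`: the largest relation closed under the clauses. -/
def BohmEtaLe (t u : Lam) : Prop :=
  ∃ R : Lam → Lam → Prop, (∀ a b, R a b → BohmEtaClause R a b) ∧ R t u


/-!
Multi types are quantitative: the typings of a checkers term determine the exact numbers of
interaction steps of its head evaluations, and a head step changes the number of interactions
and the size of a derivation by known amounts.

*From Böhm to types.* By induction on the size of derivations, a typing of `t` is transported to
`u`: head reduction of a typable term terminates without increasing the size, and the arguments of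
the head normal form are typed by strictly smaller derivations.

*From types to interaction.* Inclusion of interpretations is preserved by contexts, and `t ⇓^k`
holds if and only if `t` has a typing with `k` interactions whose environment and type are so flat
that a head normal form can only be typed with `0` interactions.

*From interaction to Böhm.* This is a Böhm-out argument. Every variable is replaced by a white
function that collects a tuple of `2 * B` arguments, performs a number of dummy interactions
characteristic of the variable, and passes the tuple on to the next argument. On a black term
`λx₁…xₙ.y t₁…tₖ` with `n, k ≤ B` this performs `n + k` interactions plus the dummy ones of `y`, and
the latter are multiples of `2 * B + 1`: the total thus reveals both `n + k` and `y`. The position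
of the argument receiving the tuple reveals `n - k`, so that `n` and `k` are known, and letting
that argument be a projection exposes `tᵢ`, to which the argument is applied again.
-/

open scoped Pointwise

/-! ### Typings as sets of usages -/

/-- The Kleisli extension, for the powerset monad, of an additive map with values in sets. -/
def setExtend {A B : Type*} [AddZeroClass A] [AddZeroClass B] (h : A →+ Set B) :
    Set A →+ Set B where
  toFun S := ⋃ a ∈ S, h a
  map_zero' := by simp [← Set.singleton_zero]
  map_add' S T := by
    ext b
    simp only [Set.mem_iUnion, Set.mem_add, exists_prop]
    constructor
    · rintro ⟨_, ⟨a, ha, a', ha', rfl⟩, hb⟩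
      obtain ⟨c, hc, c', hc', rfl⟩ := Set.mem_add.1 (map_add h a a' ▸ hb)
      exact ⟨c, ⟨a, ha, hc⟩, c', ⟨a', ha', hc'⟩, rfl⟩
    · rintro ⟨c, ⟨a, ha, hc⟩, c', ⟨a', ha', hc'⟩, rfl⟩
      exact ⟨a + a', ⟨a, ha, a', ha', rfl⟩, map_add h a a' ▸ Set.add_mem_add hc hc'⟩

section SetExtend

variable {A B : Type*} [AddZeroClass A] [AddZeroClass B] (h : A →+ Set B)

theorem mem_setExtend {S : Set A} {b : B} : b ∈ setExtend h S ↔ ∃ a ∈ S, b ∈ h a := by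
  simp [setExtend]

theorem setExtend_singleton (a : A) : setExtend h {a} = h a := by
  simp [setExtend]

theorem setExtend_iUnion {ι : Sort*} (S : ι → Set A) :
    setExtend h (⋃ i, S i) = ⋃ i, setExtend h (S i) := by
  ext b
  simp only [mem_setExtend, Set.mem_iUnion]
  grind

end SetExtend

/-- What a type derivation consumes: its type environment, its number of interactions and its
size. The size is kept as the termination measure of the head reduction of typable terms. -/
abbrev Usage : Type := TEnv × ℕ × ℕ

namespace Usage

/-- Insert an unused variable at index `d`, as lifting does. -/
def insertIdx (d : ℕ) : Usage →+ Usage where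
  toFun w := (fun n => if n < d then w.1 n else if n = d then 0 else w.1 (n - 1), w.2)
  map_zero' := by ext <;> simp
  map_add' v w := by
    refine Prod.ext (funext fun n => ?_) rfl
    simp only [Prod.fst_add, Pi.add_apply]
    split_ifs <;> simp

/-- Remove the variable of index `x`, as substituting it or abstracting it (for `x = 0`) does. -/
def eraseIdx (x : ℕ) : Usage →+ Usage where
  toFun w := (fun n => if n < x then w.1 n else w.1 (n + 1), w.2)
  map_zero' := by ext <;> simp
  map_add' v w := by
    refine Prod.ext (funext fun n => ?_) rfl
    simp only [Prod.fst_add, Pi.add_apply]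
    split_ifs <;> rfl

theorem cons_eraseIdx_zero (w : Usage) : TEnv.cons (w.1 0) (eraseIdx 0 w).1 = w.1 := by
  funext n
  cases n <;> rfl

theorem eq_of_eraseIdx_zero {v w : Usage} (h0 : v.1 0 = w.1 0)
    (h : eraseIdx 0 v = eraseIdx 0 w) : v = w :=
  Prod.ext (by rw [← cons_eraseIdx_zero, h0, h, cons_eraseIdx_zero]) (congrArg Prod.snd h :)

theorem mk_add_mk_add_const (Γ Δ : TEnv) (k k' g s s' l : ℕ) :
    ((TEnv.add Γ Δ, k + k' + g, s + s' + l) : Usage) = (Γ, k, s) + (Δ, k', s') + (0, g, l) :=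
  Prod.ext (add_zero (Γ + Δ)).symm rfl

theorem insertIdx_const (d : ℕ) (x : ℕ × ℕ) : insertIdx d (0, x) = (0, x) :=
  Prod.ext (funext fun _ => by simp [insertIdx]) rfl

theorem eraseIdx_const (d : ℕ) (x : ℕ × ℕ) : eraseIdx d (0, x) = (0, x) :=
  Prod.ext (funext fun _ => by simp [eraseIdx]) rfl

theorem insertIdx_single (d x : ℕ) (L : LType) (a : ℕ × ℕ) :
    insertIdx d (TEnv.single x L, a) = (TEnv.single (if x < d then x else x + 1) L, a) := by
  refine Prod.ext (funext fun n => ?_) rfl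
  simp only [insertIdx, TEnv.single, AddMonoidHom.coe_mk, ZeroHom.coe_mk]
  split_ifs <;> first | rfl | omega

theorem eraseIdx_single_self (x : ℕ) (L : LType) (a : ℕ × ℕ) :
    eraseIdx x (TEnv.single x L, a) = (0, a) := by
  refine Prod.ext (funext fun n => ?_) rfl
  simp only [eraseIdx, TEnv.single, AddMonoidHom.coe_mk, ZeroHom.coe_mk]
  split_ifs <;> first | rfl | omega

theorem eraseIdx_single_of_ne {x y : ℕ} (h : y ≠ x) (L : LType) (a : ℕ × ℕ) :
    eraseIdx x (TEnv.single y L, a) = (TEnv.single (if x < y then y - 1 else y) L, a) := by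
  refine Prod.ext (funext fun n => ?_) rfl
  simp only [eraseIdx, TEnv.single, AddMonoidHom.coe_mk, ZeroHom.coe_mk]
  split_ifs <;> first | rfl | omega

theorem insertIdx_succ_apply_zero (d : ℕ) (w : Usage) : (insertIdx (d + 1) w).1 0 = w.1 0 := rfl

theorem eraseIdx_zero_insertIdx_succ (d : ℕ) (w : Usage) :
    eraseIdx 0 (insertIdx (d + 1) w) = insertIdx d (eraseIdx 0 w) := by
  refine Prod.ext (funext fun n => ?_) rfl
  simp only [eraseIdx, insertIdx, AddMonoidHom.coe_mk, ZeroHom.coe_mk]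
  grind

theorem eraseIdx_zero_insertIdx_zero (w : Usage) : eraseIdx 0 (insertIdx 0 w) = w := rfl

theorem eraseIdx_zero_eraseIdx_succ (x : ℕ) (w : Usage) :
    eraseIdx 0 (eraseIdx (x + 1) w) = eraseIdx x (eraseIdx 0 w) := by
  refine Prod.ext (funext fun n => ?_) rfl
  simp [eraseIdx]

end Usage

open Usage

/-- The usages with which `t` has type `L`. A derivation of a multi type being a family of
derivations of its linear types, its usages form the Minkowski sum of theirs. -/
def CTerm.typings : CTerm → LType → Set Usage
  | .var x, L => {(TEnv.single x L, 0, 0)}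
  | .lam p t, L => {w | ∃ (M : List LType) (q : Player) (L' : LType), L = .arrow M p q L' ∧
      ∃ v ∈ t.typings L', v.1 0 = M ∧ eraseIdx 0 v = w}
  | .app q t u, L => ⋃ (M : List LType) (p : Player),
      t.typings (.arrow M p q L) + ((M : Multiset LType).map u.typings).sum +
        {(0, Player.gamma p q, 1)}

namespace CTerm

/-- The usages with which `t` has the multi type `M`. -/
abbrev multiTypings (t : CTerm) (M : Multiset LType) : Set Usage := (M.map t.typings).sum

theorem typings_liftAt (t : CTerm) (d : ℕ) (L : LType) :
    (t.liftAt d).typings L = insertIdx d '' t.typings L := by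
  induction t generalizing d L with
  | var x => simp [liftAt, typings, insertIdx_single]
  | lam p t ih =>
    ext w
    simp only [liftAt, typings, ih, Set.mem_ofPred_eq, Set.mem_image, exists_exists_and_eq_and,
      insertIdx_succ_apply_zero, eraseIdx_zero_insertIdx_succ]
    grind
  | app q t u iht ihu =>
    simp only [liftAt, typings, iht, ihu, Set.image_iUnion, Set.image_add,
      Set.image_multiset_sum, Multiset.map_map, Function.comp_def, Set.image_singleton,
      insertIdx_const]

theorem multiTypings_liftAt (t : CTerm) (d : ℕ) (M : Multiset LType) :
    (t.liftAt d).multiTypings M = insertIdx d '' t.multiTypings M := by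
  simp only [multiTypings, funext (typings_liftAt t d), Set.image_multiset_sum, Multiset.map_map,
    Function.comp_def]

/-- Substituting for `x` a term with the usages `U L` of each type `L`: a usage loses its `x`
component `M` and gains a usage of the multi type `M`. -/
def substUsage (x : ℕ) (U : LType → Set Usage) : Usage →+ Set Usage where
  toFun w := {eraseIdx x w} + ((w.1 x).map U).sum
  map_zero' := by simp [← Set.singleton_zero]
  map_add' v w := by
    simp only [map_add, Prod.fst_add, Pi.add_apply, Multiset.map_add, Multiset.sum_add,
      ← Set.singleton_add_singleton]
    abel

theorem substUsage_const (x : ℕ) (U : LType → Set Usage) (a : ℕ × ℕ) :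
    substUsage x U (0, a) = {(0, a)} := by
  simp only [substUsage, AddMonoidHom.coe_mk, ZeroHom.coe_mk, Pi.zero_apply, Multiset.map_zero,
    Multiset.sum_zero, add_zero, eraseIdx_const]

theorem mem_substUsage_succ_liftAt {u : CTerm} {x : ℕ} {v w : Usage} :
    v ∈ substUsage (x + 1) (u.liftAt 0).typings w ↔
      v.1 0 = w.1 0 ∧ eraseIdx 0 v ∈ substUsage x u.typings (eraseIdx 0 w) := by
  change v ∈ {eraseIdx (x + 1) w} + (u.liftAt 0).multiTypings (w.1 (x + 1)) ↔
    v.1 0 = w.1 0 ∧ eraseIdx 0 v ∈ {eraseIdx x (eraseIdx 0 w)} + u.multiTypings (w.1 (x + 1))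
  simp only [multiTypings_liftAt, Set.singleton_add, Set.mem_image, exists_exists_and_eq_and]
  constructor
  · rintro ⟨a, ha, rfl⟩
    refine ⟨by simp [eraseIdx, insertIdx], a, ha, ?_⟩
    rw [map_add, eraseIdx_zero_insertIdx_zero, eraseIdx_zero_eraseIdx_succ]
  · rintro ⟨h0, a, ha, hv⟩
    refine ⟨a, ha, eq_of_eraseIdx_zero ?_ ?_⟩
    · simp [eraseIdx, insertIdx, h0]
    · rw [map_add, eraseIdx_zero_insertIdx_zero, eraseIdx_zero_eraseIdx_succ, hv]

theorem typings_subst (t u : CTerm) (x : ℕ) (L : LType) :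
    (t.subst x u).typings L = setExtend (substUsage x u.typings) (t.typings L) := by
  induction t generalizing x u L with
  | var n =>
    rw [typings, setExtend_singleton]
    rcases eq_or_ne n x with rfl | hn
    · have : (TEnv.single n L) n = {L} := if_pos rfl
      simp only [substUsage, AddMonoidHom.coe_mk, ZeroHom.coe_mk, this, Multiset.map_singleton,
        Multiset.sum_singleton, eraseIdx_single_self, subst, if_true]
      exact (zero_add _).symm
    · have : (TEnv.single n L) x = 0 := if_neg hn.symm
      simp only [substUsage, AddMonoidHom.coe_mk, ZeroHom.coe_mk, this, Multiset.map_zero,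
        Multiset.sum_zero, add_zero, eraseIdx_single_of_ne hn, subst, if_neg hn]
      split_ifs <;> rfl
  | lam p t ih =>
    ext w
    simp only [subst, typings, ih, Set.mem_ofPred_eq, mem_setExtend, mem_substUsage_succ_liftAt]
    constructor
    · rintro ⟨M, q, L', rfl, v, ⟨a, ha, hva, hv⟩, hM, rfl⟩
      exact ⟨eraseIdx 0 a, ⟨M, q, L', rfl, a, ha, hva.symm.trans hM, rfl⟩, hv⟩
    · rintro ⟨_, ⟨M, q, L', rfl, a, ha, hM, rfl⟩, hw⟩
      exact ⟨M, q, L', rfl, (TEnv.cons M w.1, w.2), ⟨a, ha, hM.symm, hw⟩, rfl, rfl⟩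
  | app q t s iht ihs =>
    simp only [subst, typings, iht, ihs, setExtend_iUnion, map_add, setExtend_singleton,
      map_multiset_sum, Multiset.map_map, Function.comp_def, substUsage_const]

/-- Subject reduction and subject expansion in one equation. -/
theorem typings_beta (p q : Player) (t u : CTerm) (L : LType) :
    (app q (lam p t) u).typings L = (t.subst 0 u).typings L + {(0, Player.gamma p q, 1)} := by
  ext w
  simp only [typings_subst, typings, Set.mem_iUnion, Set.mem_add, Set.mem_singleton_iff,
    mem_setExtend, substUsage, AddMonoidHom.coe_mk, ZeroHom.coe_mk, Set.mem_ofPred_eq,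
    LType.arrow.injEq]
  constructor
  · rintro ⟨M, p', _, ⟨v, ⟨_, _, _, ⟨rfl, rfl, rfl, rfl⟩, a, ha, hM, rfl⟩, b, hb, rfl⟩, _, rfl, rfl⟩
    exact ⟨_, ⟨a, ha, _, rfl, b, hM ▸ hb, rfl⟩, _, rfl, rfl⟩
  · rintro ⟨_, ⟨a, ha, _, rfl, b, hb, rfl⟩, _, rfl, rfl⟩
    have hM := Multiset.coe_toList (a.1 0)
    exact ⟨(a.1 0).toList, p, _, ⟨_, ⟨_, _, _, ⟨rfl, rfl, rfl, rfl⟩, a, ha, hM.symm, rfl⟩, b,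
      hM.symm ▸ hb, rfl⟩, _, rfl, rfl⟩

mutual

theorem exists_mem_typings {Γ : TEnv} {k : ℕ} {t : CTerm} {L : LType} :
    Deriv Γ k t L → ∃ s, (Γ, k, s) ∈ t.typings L
  | .ax x L => ⟨0, rfl⟩
  | .lam p q M π => by
    obtain ⟨s, hs⟩ := exists_mem_typings π
    exact ⟨s, M, q, _, rfl, _, hs, rfl, rfl⟩
  | .app (M := M) (p := p) π μ => by
    obtain ⟨s, hs⟩ := exists_mem_typings π
    obtain ⟨s', hs'⟩ := exists_mem_multiTypings μ
    refine ⟨s + s' + 1, Set.mem_iUnion₂.2 ⟨M, p, ?_⟩⟩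
    rw [mk_add_mk_add_const]
    exact Set.add_mem_add (Set.add_mem_add hs hs') rfl

theorem exists_mem_multiTypings {Γ : TEnv} {k : ℕ} {t : CTerm} {M : List LType} :
    DerivM Γ k t M → ∃ s, (Γ, k, s) ∈ t.multiTypings M
  | .nil _ => ⟨0, rfl⟩
  | .cons π μ => by
    obtain ⟨s, hs⟩ := exists_mem_typings π
    obtain ⟨s', hs'⟩ := exists_mem_multiTypings μ
    exact ⟨s + s', Set.add_mem_add hs hs'⟩

end

theorem nonempty_derivM {t : CTerm} (ht : ∀ L, ∀ w ∈ t.typings L, TJ w.1 w.2.1 t L)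
    (M : List LType) {w : Usage} (hw : w ∈ t.multiTypings M) :
    Nonempty (DerivM w.1 w.2.1 t M) := by
  induction M generalizing w with
  | nil =>
    obtain rfl : w = 0 := hw
    exact ⟨.nil t⟩
  | cons L M ih =>
    obtain ⟨a, ha, b, hb, rfl⟩ : w ∈ t.typings L + t.multiTypings M := by
      simpa [multiTypings] using hw
    obtain ⟨π⟩ := ht L a ha
    obtain ⟨μ⟩ := ih hb
    exact ⟨.cons π μ⟩

theorem tj_of_mem_typings (t : CTerm) (L : LType) {w : Usage} (hw : w ∈ t.typings L) :
    TJ w.1 w.2.1 t L := by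
  induction t generalizing L w with
  | var x =>
    obtain rfl := hw
    exact ⟨.ax x L⟩
  | lam p t ih =>
    obtain ⟨M, q, L', rfl, v, hv, hM, rfl⟩ := hw
    obtain ⟨π⟩ := ih L' hv
    rw [← cons_eraseIdx_zero v, hM] at π
    exact ⟨.lam p q M π⟩
  | app q t u iht ihu =>
    obtain ⟨M, p, _, ⟨⟨Γ, k, s⟩, ha, ⟨Δ, k', s'⟩, hb, rfl⟩, _, rfl, hw⟩ := Set.mem_iUnion₂.1 hw
    obtain rfl := (mk_add_mk_add_const ..).trans hw
    obtain ⟨π⟩ := iht _ ha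
    obtain ⟨μ⟩ := nonempty_derivM (fun L _ => ihu L) M hb
    exact ⟨.app π μ⟩

theorem mem_cSem {t : CTerm} {Γ : TEnv} {k : ℕ} {L : LType} :
    (Γ, k, L) ∈ CSem t ↔ ∃ s, (Γ, k, s) ∈ t.typings L :=
  ⟨fun ⟨π⟩ => exists_mem_typings π, fun ⟨_, hs⟩ => tj_of_mem_typings t L hs⟩

end CTerm

/-! ### Head steps and quantitative subject reduction -/

/-- The root rule of checkers head reduction, graded by its number of interactions. -/
inductive BetaRoot : ℕ → CTerm → CTerm → Prop
  | beta (p q : Player) (t u : CTerm) :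
      BetaRoot (Player.gamma p q) (.app q (.lam p t) u) (t.subst 0 u)

/-- A checkers head step with `g` interactions. -/
abbrev HeadStep (g : ℕ) : CTerm → CTerm → Prop := CHead (BetaRoot g)

theorem silentRoot_eq : SilentRoot = BetaRoot 0 := by
  ext t u
  constructor
  · rintro ⟨p, t, u⟩
    simpa [Player.gamma] using BetaRoot.beta p p t u
  · generalize hg : 0 = g
    rintro ⟨p, q, t, u⟩
    obtain rfl : p = q := by
      by_contra h
      simp [Player.gamma, h] at hg
    exact .beta p t u

theorem interRoot_eq : InterRoot = BetaRoot 1 := by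
  ext t u
  constructor
  · rintro ⟨p, t, u⟩
    cases p
    exacts [.beta .white .black t u, .beta .black .white t u]
  · generalize hg : 1 = g
    rintro ⟨p, q, t, u⟩
    rcases p with _ | _ <;> rcases q with _ | _
    · cases hg
    · exact InterRoot.beta .white t u
    · exact InterRoot.beta .black t u
    · cases hg

theorem hStepTau_iff {t u : CTerm} : HStepTau t u ↔ HeadStep 0 t u := by
  rw [HStepTau, silentRoot_eq]

theorem hStepInt_iff {t u : CTerm} : HStepInt t u ↔ HeadStep 1 t u := by
  rw [HStepInt, interRoot_eq]

theorem BetaRoot.grade {g : ℕ} {t u : CTerm} (h : BetaRoot g t u) : g = 0 ∨ g = 1 := by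
  obtain ⟨p, q, t, u⟩ := h
  simp only [Player.gamma]
  split_ifs <;> simp

theorem HeadStep.grade {g : ℕ} {t u : CTerm} (h : HeadStep g t u) : g = 0 ∨ g = 1 := by
  induction h with
  | spine h =>
    induction h with
    | root h => exact h.grade
    | appL _ _ _ ih => exact ih
  | lam _ _ ih => exact ih

theorem hStepCh_iff {t u : CTerm} : HStepCh t u ↔ ∃ g, HeadStep g t u := by
  rw [HStepCh, hStepTau_iff, hStepInt_iff]
  constructor
  · rintro (h | h)
    exacts [⟨_, h⟩, ⟨_, h⟩]
  · rintro ⟨g, h⟩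
    rcases h.grade with rfl | rfl
    exacts [.inl h, .inr h]

theorem BigStep.headStep {g k : ℕ} {t u : CTerm} (h : HeadStep g t u) (hu : BigStep u k) :
    BigStep t (k + g) := by
  rcases h.grade with rfl | rfl
  exacts [.silent (hStepTau_iff.2 h) hu, .inter (hStepInt_iff.2 h) hu]

namespace CTerm

theorem typings_headStep {g : ℕ} {t u : CTerm} (h : HeadStep g t u) (L : LType) :
    t.typings L = u.typings L + {(0, g, 1)} := by
  induction h generalizing L with
  | spine h =>
    induction h generalizing L with
    | root h =>
      obtain ⟨p, q, t, u⟩ := h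
      exact typings_beta p q t u L
    | appL q u _ ih =>
      simp only [typings, ih, Set.iUnion_add]
      exact Set.iUnion₂_congr fun _ _ => by abel
  | lam p _ ih =>
    ext w
    simp only [typings, ih, Set.mem_ofPred_eq, Set.mem_add, Set.mem_singleton_iff]
    constructor
    · rintro ⟨M, q, L', rfl, _, ⟨v, hv, _, rfl, rfl⟩, hM, rfl⟩
      have hM : v.1 0 = M := by simpa using hM
      exact ⟨_, ⟨M, q, L', rfl, v, hv, hM, rfl⟩, _, rfl, by rw [map_add, eraseIdx_const]⟩
    · rintro ⟨_, ⟨M, q, L', rfl, v, hv, hM, rfl⟩, _, rfl, rfl⟩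
      exact ⟨M, q, L', rfl, _, ⟨v, hv, _, rfl, rfl⟩, by simpa using hM,
        by rw [map_add, eraseIdx_const]⟩

theorem mem_typings_headStep {g : ℕ} {t u : CTerm} (h : HeadStep g t u) {Γ : TEnv} {k s : ℕ}
    {L : LType} : (Γ, k, s) ∈ t.typings L ↔
      ∃ k' s', (Γ, k', s') ∈ u.typings L ∧ k' + g = k ∧ s' + 1 = s := by
  simp [typings_headStep h]

theorem mem_cSem_headStep {g : ℕ} {t u : CTerm} (h : HeadStep g t u) {Γ : TEnv} {k : ℕ}
    {L : LType} : (Γ, k, L) ∈ CSem t ↔ ∃ k', (Γ, k', L) ∈ CSem u ∧ k' + g = k := by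
  simp only [mem_cSem, mem_typings_headStep h]
  grind

theorem cSem_eq_of_silent_headStep {t u : CTerm} (h : HeadStep 0 t u) : CSem t = CSem u := by
  ext ⟨Γ, k, L⟩
  simp [mem_cSem_headStep h]

end CTerm

/-! ### Head normal forms and adequacy -/

namespace CTerm

/-- Applicative spines with a variable in head position. -/
inductive Neutral : CTerm → Prop
  | var (x : ℕ) : Neutral (.var x)
  | app (q : Player) {t : CTerm} (u : CTerm) : Neutral t → Neutral (.app q t u)

/-- The grammar of head normal forms: abstractions in front of a neutral term. -/
inductive Normal : CTerm → Prop
  | neutral {t : CTerm} : Neutral t → Normal t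
  | lam (p : Player) {t : CTerm} : Normal t → Normal (.lam p t)

theorem Neutral.not_cSpine {g : ℕ} {t u : CTerm} (ht : t.Neutral) :
    ¬ CSpine (BetaRoot g) t u := by
  induction ht generalizing u with
  | var x => rintro ⟨⟨⟩⟩
  | app q u ht ih =>
    rintro (⟨⟨⟩⟩ | ⟨-, -, h⟩)
    · cases ht
    · exact ih h

theorem Normal.hnf {t : CTerm} (ht : t.Normal) : t.HNF := by
  intro u hu
  obtain ⟨g, hu⟩ := hStepCh_iff.1 hu
  induction ht generalizing u with
  | neutral ht =>
    obtain h | ⟨p, h⟩ := hu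
    · exact ht.not_cSpine h
    · cases ht
  | lam p _ ih =>
    obtain ⟨⟨⟨⟩⟩⟩ | ⟨_, h⟩ := hu
    exact ih _ (hStepCh_iff.2 ⟨g, h⟩) h

theorem eq_lam_or_neutral_or_cSpine (t : CTerm) :
    (∃ p a, t = .lam p a) ∨ t.Neutral ∨ ∃ g u, CSpine (BetaRoot g) t u := by
  induction t with
  | var x => exact .inr (.inl (.var x))
  | lam p a _ => exact .inl ⟨p, a, rfl⟩
  | app q t u iht _ =>
    right
    rcases iht with ⟨p, a, rfl⟩ | h | ⟨g, v, h⟩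
    exacts [.inr ⟨_, _, .root (.beta p q a u)⟩, .inl (h.app q u), .inr ⟨g, _, h.appL q u⟩]

theorem HNF.normal {t : CTerm} (ht : t.HNF) : t.Normal := by
  induction t with
  | var x => exact .neutral (.var x)
  | lam p a ih => exact .lam p (ih fun u hu => ht (.lam p u) (hu.imp (.lam p) (.lam p)))
  | app q t u _ _ =>
    rcases eq_lam_or_neutral_or_cSpine (.app q t u) with ⟨p, a, ⟨⟩⟩ | h | ⟨g, v, h⟩
    exacts [.neutral h, absurd (hStepCh_iff.2 ⟨g, .spine h⟩) (ht v)]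

theorem HNF.bigStep_iff {t : CTerm} (ht : t.HNF) {k : ℕ} : BigStep t k ↔ k = 0 := by
  constructor
  · rintro (_ | ⟨h, _⟩ | ⟨h, _⟩)
    exacts [rfl, absurd (.inl h) (ht _), absurd (.inr h) (ht _)]
  · rintro rfl
    exact .nf ht

end CTerm

/-- The types `[] →_{q₁,q₁} ⋯ [] →_{qₙ,qₙ} X` of the head variables of normal forms: no argument
is typed and no interaction is counted. -/
inductive LType.Flat : LType → Prop
  | atom : Flat .atom
  | arrow (q : Player) {L : LType} : Flat L → Flat (.arrow [] q q L)

/-- Types whose successive sources consist of flat types. -/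
inductive LType.FlatSources : LType → Prop
  | atom : FlatSources .atom
  | arrow {M : List LType} (p q : Player) {L : LType} :
      (∀ Y ∈ M, LType.Flat Y) → FlatSources L → FlatSources (.arrow M p q L)

/-- Environments of flat types. -/
def TEnv.Flat (Γ : TEnv) : Prop := ∀ n, ∀ Y ∈ Γ n, Y.Flat

theorem Usage.flat_iff {w : Usage} :
    w.1.Flat ↔ (∀ Y ∈ w.1 0, Y.Flat) ∧ (eraseIdx 0 w).1.Flat :=
  ⟨fun h => ⟨h 0, fun n => h (n + 1)⟩, fun ⟨hM, hΓ⟩ n => n.casesOn hM hΓ⟩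

theorem TEnv.flat_single {x : ℕ} {L : LType} : (TEnv.single x L).Flat ↔ L.Flat := by
  constructor
  · exact fun h => h x L (by simp [TEnv.single])
  · intro h n Y hY
    simp only [TEnv.single] at hY
    split_ifs at hY
    · rwa [Multiset.mem_singleton.1 hY]
    · simp at hY

namespace CTerm

theorem Neutral.exists_flat_typing {t : CTerm} (ht : t.Neutral) {L : LType} (hL : L.Flat) :
    ∃ Γ s, Γ.Flat ∧ (Γ, 0, s) ∈ t.typings L := by
  induction ht generalizing L with
  | var x => exact ⟨TEnv.single x L, 0, TEnv.flat_single.2 hL, rfl⟩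
  | app q u _ ih =>
    obtain ⟨Γ, s, hΓ, hs⟩ := ih (hL.arrow q)
    refine ⟨Γ, s + 1, hΓ, Set.mem_iUnion₂.2 ⟨[], q, (Γ, 0, s), ?_, _, rfl, ?_⟩⟩
    · simpa using hs
    · simp [Player.gamma]

theorem Normal.exists_flat_typing {t : CTerm} (ht : t.Normal) :
    ∃ Γ s L, Γ.Flat ∧ L.FlatSources ∧ (Γ, 0, s) ∈ t.typings L := by
  induction ht with
  | neutral ht =>
    obtain ⟨Γ, s, hΓ, hs⟩ := ht.exists_flat_typing .atom
    exact ⟨Γ, s, _, hΓ, .atom, hs⟩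
  | lam p _ ih =>
    obtain ⟨Γ, s, L, hΓ, hL, hs⟩ := ih
    obtain ⟨hΓ0, hΓ⟩ := flat_iff (w := (Γ, 0, s)).1 hΓ
    exact ⟨_, s, .arrow (Γ 0).toList p p L, hΓ, hL.arrow p p (by simpa using hΓ0),
      _, _, _, rfl, _, hs, (Multiset.coe_toList _).symm, rfl⟩

theorem Neutral.flat_of_mem_typings {t : CTerm} (ht : t.Neutral) {w : Usage} {L : LType}
    (hw : w ∈ t.typings L) (hΓ : w.1.Flat) : w.2.1 = 0 ∧ L.Flat := by
  induction ht generalizing w L with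
  | var x =>
    obtain rfl := hw
    exact ⟨rfl, TEnv.flat_single.1 hΓ⟩
  | app q u _ ih =>
    obtain ⟨M, p, _, ⟨a, ha, b, hb, rfl⟩, _, rfl, rfl⟩ := Set.mem_iUnion₂.1 hw
    obtain ⟨hk, hL⟩ := ih ha fun n Y hY => hΓ n Y (by simp [hY])
    cases hL with
    | arrow _ hL =>
      obtain rfl : b = 0 := hb
      exact ⟨by simp [hk, Player.gamma], hL⟩

theorem Normal.interactions_eq_zero {t : CTerm} (ht : t.Normal) {w : Usage} {L : LType}
    (hw : w ∈ t.typings L) (hΓ : w.1.Flat) (hL : L.FlatSources) : w.2.1 = 0 := by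
  induction ht generalizing w L with
  | neutral ht => exact (ht.flat_of_mem_typings hw hΓ).1
  | lam p _ ih =>
    obtain ⟨M, q, L, rfl, v, hv, hM, rfl⟩ := hw
    cases hL with
    | arrow _ _ hYs hL =>
      exact ih (w := v) hv (flat_iff.2 ⟨by simpa [hM] using hYs, hΓ⟩) hL

end CTerm

theorem BigStep.exists_flat_typing {t : CTerm} {k : ℕ} (h : BigStep t k) :
    ∃ Γ L, Γ.Flat ∧ L.FlatSources ∧ (Γ, k, L) ∈ CSem t := by
  induction h with
  | nf h =>
    obtain ⟨Γ, s, L, hΓ, hL, hs⟩ := h.normal.exists_flat_typing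
    exact ⟨Γ, L, hΓ, hL, CTerm.mem_cSem.2 ⟨s, hs⟩⟩
  | silent h _ ih =>
    obtain ⟨Γ, L, hΓ, hL, hu⟩ := ih
    exact ⟨Γ, L, hΓ, hL, (CTerm.mem_cSem_headStep (hStepTau_iff.1 h)).2 ⟨_, hu, rfl⟩⟩
  | inter h _ ih =>
    obtain ⟨Γ, L, hΓ, hL, hu⟩ := ih
    exact ⟨Γ, L, hΓ, hL, (CTerm.mem_cSem_headStep (hStepInt_iff.1 h)).2 ⟨_, hu, rfl⟩⟩

theorem bigStep_of_flat_typing {Γ : TEnv} {L : LType} (hΓ : Γ.Flat) (hL : L.FlatSources)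
    {t : CTerm} {k s : ℕ} (h : (Γ, k, s) ∈ t.typings L) : BigStep t k := by
  induction s using Nat.strong_induction_on generalizing t k with
  | _ s ih =>
    by_cases ht : t.HNF
    · obtain rfl : k = 0 := ht.normal.interactions_eq_zero h hΓ hL
      exact .nf ht
    · obtain ⟨u, hu⟩ : ∃ u, HStepCh t u := by simpa [CTerm.HNF] using ht
      obtain ⟨g, hu⟩ := hStepCh_iff.1 hu
      obtain ⟨k, s', hs', rfl, rfl⟩ := (CTerm.mem_typings_headStep hu).1 h
      exact (ih s' s'.lt_succ_self hs').headStep hu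

theorem bigStep_iff {t : CTerm} {k : ℕ} :
    BigStep t k ↔ ∃ Γ L, Γ.Flat ∧ L.FlatSources ∧ (Γ, k, L) ∈ CSem t := by
  refine ⟨fun h => h.exists_flat_typing, ?_⟩
  rintro ⟨Γ, L, hΓ, hL, h⟩
  obtain ⟨s, hs⟩ := CTerm.mem_cSem.1 h
  exact bigStep_of_flat_typing hΓ hL hs

theorem BigStep.mono {t u : CTerm} (h : CSem t ⊆ CSem u) {k : ℕ} (ht : BigStep t k) :
    BigStep u k := by
  obtain ⟨Γ, L, hΓ, hL, hk⟩ := bigStep_iff.1 ht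
  exact bigStep_iff.2 ⟨Γ, L, hΓ, hL, h hk⟩

/-! ### Parallel substitution -/

namespace CTerm

/-- The renaming under one more binder. -/
def upRen (ξ : ℕ → ℕ) : ℕ → ℕ
  | 0 => 0
  | n + 1 => ξ n + 1

/-- Renaming of the free indices. -/
def rename : CTerm → (ℕ → ℕ) → CTerm
  | .var n, ξ => .var (ξ n)
  | .lam p t, ξ => .lam p (t.rename (upRen ξ))
  | .app q t u, ξ => .app q (t.rename ξ) (u.rename ξ)

/-- The parallel substitution under one more binder. -/
def up (σ : ℕ → CTerm) : ℕ → CTerm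
  | 0 => .var 0
  | n + 1 => (σ n).liftAt 0

/-- Capture-avoiding parallel substitution of all the free indices. -/
def inst : CTerm → (ℕ → CTerm) → CTerm
  | .var n, σ => σ n
  | .lam p t, σ => .lam p (t.inst (up σ))
  | .app q t u, σ => .app q (t.inst σ) (u.inst σ)

/-- The parallel substitution sending `0` to `a` and `n + 1` to `σ n`. -/
def scons (a : CTerm) (σ : ℕ → CTerm) : ℕ → CTerm
  | 0 => a
  | n + 1 => σ n

theorem liftAt_eq_rename (t : CTerm) (d : ℕ) :
    t.liftAt d = t.rename fun n => if n < d then n else n + 1 := by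
  induction t generalizing d with
  | var n => rfl
  | lam p t ih =>
    simp only [liftAt, rename, ih]
    congr 2
    funext n
    cases n with
    | zero => simp [upRen]
    | succ n => simp only [upRen]; split_ifs <;> omega
  | app q t u iht ihu => simp only [liftAt, rename, iht, ihu]

theorem liftAt_zero (t : CTerm) : t.liftAt 0 = t.rename Nat.succ := by
  rw [liftAt_eq_rename]
  rfl

theorem rename_rename (t : CTerm) (ξ ζ : ℕ → ℕ) :
    (t.rename ξ).rename ζ = t.rename fun n => ζ (ξ n) := by
  induction t generalizing ξ ζ with
  | var n => rfl
  | lam p t ih =>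
    simp only [rename, ih]
    congr 2
    funext n
    cases n <;> rfl
  | app q t u iht ihu => simp only [rename, iht, ihu]

theorem inst_rename (t : CTerm) (ξ : ℕ → ℕ) (σ : ℕ → CTerm) :
    (t.rename ξ).inst σ = t.inst fun n => σ (ξ n) := by
  induction t generalizing ξ σ with
  | var n => rfl
  | lam p t ih =>
    simp only [rename, inst, ih]
    congr 2
    funext n
    cases n <;> rfl
  | app q t u iht ihu => simp only [rename, inst, iht, ihu]

theorem rename_inst (t : CTerm) (σ : ℕ → CTerm) (ξ : ℕ → ℕ) :
    (t.inst σ).rename ξ = t.inst fun n => (σ n).rename ξ := by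
  induction t generalizing σ ξ with
  | var n => rfl
  | lam p t ih =>
    simp only [rename, inst, ih]
    congr 2
    funext n
    cases n with
    | zero => rfl
    | succ n => simp only [up, liftAt_zero, rename_rename, upRen]
  | app q t u iht ihu => simp only [rename, inst, iht, ihu]

theorem inst_inst (t : CTerm) (σ τ : ℕ → CTerm) :
    (t.inst σ).inst τ = t.inst fun n => (σ n).inst τ := by
  induction t generalizing σ τ with
  | var n => rfl
  | lam p t ih =>
    simp only [inst, ih]
    congr 2
    funext n
    cases n with
    | zero => rfl
    | succ n => simp only [up, liftAt_zero, rename_inst, inst_rename]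
  | app q t u iht ihu => simp only [inst, iht, ihu]

theorem up_var : up .var = .var := by
  funext n
  cases n <;> rfl

theorem inst_var (t : CTerm) : t.inst .var = t := by
  induction t with
  | var n => rfl
  | lam p t ih => simp only [inst, up_var, ih]
  | app q t u iht ihu => simp only [inst, iht, ihu]

theorem subst_eq_inst (t : CTerm) (x : ℕ) (u : CTerm) : t.subst x u =
    t.inst fun n => if n = x then u else if x < n then .var (n - 1) else .var n := by
  induction t generalizing x u with
  | var n => rfl
  | lam p t ih =>
    simp only [subst, inst, ih]
    congr 2
    funext n
    cases n with
    | zero => simp [up]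
    | succ n =>
      simp only [up, add_left_inj, add_lt_add_iff_right]
      split_ifs <;> grind [liftAt]
  | app q t u iht ihu => simp only [subst, inst, iht, ihu]

theorem subst_zero (t u : CTerm) : t.subst 0 u = t.inst (scons u .var) := by
  rw [subst_eq_inst]
  congr 1
  funext n
  cases n <;> simp [scons]

theorem inst_up_subst_zero (t u : CTerm) (σ : ℕ → CTerm) :
    (t.inst (up σ)).subst 0 u = t.inst (scons u σ) := by
  rw [subst_zero, inst_inst]
  congr 1
  funext n
  cases n with
  | zero => rfl
  | succ n =>
    simp only [up, liftAt_zero, inst_rename, scons]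
    exact inst_var _

theorem inst_subst_zero (t u : CTerm) (σ : ℕ → CTerm) :
    (t.subst 0 u).inst σ = (t.inst (up σ)).subst 0 (u.inst σ) := by
  rw [inst_up_subst_zero, subst_zero, inst_inst]
  congr 1
  funext n
  cases n <;> rfl

theorem cSpine_inst {g : ℕ} {t u : CTerm} (h : CSpine (BetaRoot g) t u) (σ : ℕ → CTerm) :
    CSpine (BetaRoot g) (t.inst σ) (u.inst σ) := by
  induction h with
  | root h =>
    obtain ⟨p, q, t, u⟩ := h
    rw [inst_subst_zero]
    exact .root (.beta p q _ _)
  | appL q u _ ih => exact .appL q _ ih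

theorem headStep_inst {g : ℕ} {t u : CTerm} (h : HeadStep g t u) (σ : ℕ → CTerm) :
    HeadStep g (t.inst σ) (u.inst σ) := by
  induction h generalizing σ with
  | spine h => exact .spine (cSpine_inst h σ)
  | lam p _ ih => exact .lam p (ih _)

/-- A strict upper bound of the free indices. -/
def freeBound : CTerm → ℕ
  | .var n => n + 1
  | .lam _ t => t.freeBound - 1
  | .app _ t u => max t.freeBound u.freeBound

theorem inst_congr (t : CTerm) {σ τ : ℕ → CTerm} (h : ∀ n < t.freeBound, σ n = τ n) :
    t.inst σ = t.inst τ := by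
  induction t generalizing σ τ with
  | var n => exact h n n.lt_succ_self
  | lam p t ih =>
    simp only [inst]
    rw [ih (σ := up σ) (τ := up τ)]
    intro n hn
    cases n with
    | zero => rfl
    | succ n => simp only [up, h n (Nat.lt_sub_of_add_lt hn)]
  | app q t u iht ihu =>
    simp only [inst]
    rw [iht fun n hn => h n (lt_max_of_lt_left hn), ihu fun n hn => h n (lt_max_of_lt_right hn)]

end CTerm

/-! ### The type preorder is contextual -/

/-- The typings of `t` of size less than `b` are, up to their size, typings of `u`. -/
def TypeLeBelow (b : ℕ) (t u : CTerm) : Prop :=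
  ∀ ⦃L : LType⦄ ⦃w : Usage⦄, w ∈ t.typings L → w.2.2 < b →
    ∃ s, (w.1, w.2.1, s) ∈ u.typings L

theorem cSem_subset_iff {t u : CTerm} : CSem t ⊆ CSem u ↔ ∀ b, TypeLeBelow b t u := by
  constructor
  · intro h b L w hw _
    exact CTerm.mem_cSem.1 (h (CTerm.mem_cSem.2 ⟨_, hw⟩))
  · rintro h ⟨Γ, k, L⟩ hx
    obtain ⟨s, hs⟩ := CTerm.mem_cSem.1 hx
    exact CTerm.mem_cSem.2 (h (s + 1) hs s.lt_succ_self)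

namespace TypeLeBelow

variable {b : ℕ} {t t' u u' : CTerm}

theorem refl (b : ℕ) (t : CTerm) : TypeLeBelow b t t := fun _ _ hw _ => ⟨_, hw⟩

theorem lam (p : Player) (h : TypeLeBelow b t u) : TypeLeBelow b (.lam p t) (.lam p u) := by
  rintro _ _ ⟨M, q, L, rfl, v, hv, hM, rfl⟩ hb
  obtain ⟨s, hs⟩ := h hv hb
  exact ⟨s, M, q, L, rfl, _, hs, hM, rfl⟩

theorem multiTypings (h : TypeLeBelow b t u) {M : Multiset LType} {w : Usage}
    (hw : w ∈ t.multiTypings M) (hb : w.2.2 < b) :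
    ∃ s, (w.1, w.2.1, s) ∈ u.multiTypings M := by
  induction M using Multiset.induction generalizing w with
  | empty =>
    obtain rfl : w = 0 := hw
    exact ⟨0, rfl⟩
  | cons L M ih =>
    simp only [CTerm.multiTypings, Multiset.map_cons, Multiset.sum_cons] at hw ⊢
    obtain ⟨v, hv, v', hv', rfl⟩ := hw
    obtain ⟨s, hs⟩ := h hv (lt_of_le_of_lt (Nat.le_add_right ..) hb)
    obtain ⟨s', hs'⟩ := ih hv' (lt_of_le_of_lt (Nat.le_add_left ..) hb)
    exact ⟨s + s', Set.add_mem_add hs hs'⟩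

/-- The argument of an application is typed by strictly smaller derivations. -/
theorem app (q : Player) (h : TypeLeBelow (b + 1) t u) (h' : TypeLeBelow b t' u') :
    TypeLeBelow (b + 1) (.app q t t') (.app q u u') := by
  intro L w hw hb
  obtain ⟨M, p, _, ⟨v, hv, v', hv', rfl⟩, _, rfl, rfl⟩ := Set.mem_iUnion₂.1 hw
  replace hb : v.2.2 + v'.2.2 < b := Nat.lt_of_succ_lt_succ hb
  obtain ⟨s, hs⟩ := h hv (by omega)
  obtain ⟨s', hs'⟩ := h'.multiTypings hv' (by omega)
  exact ⟨s + s' + 1, Set.mem_iUnion₂.2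
    ⟨M, p, _, Set.add_mem_add hs hs', _, rfl, rfl⟩⟩

end TypeLeBelow

theorem cSem_fill_subset {t u : CTerm} (h : CSem t ⊆ CSem u) (C : CCtx) :
    CSem (C.fill t) ⊆ CSem (C.fill u) := by
  have app {q : Player} {t t' u u' : CTerm} (h : CSem t ⊆ CSem u) (h' : CSem t' ⊆ CSem u') :
      CSem (.app q t t') ⊆ CSem (.app q u u') :=
    cSem_subset_iff.2 fun b L w hw hb =>
      ((cSem_subset_iff.1 h (b + 1)).app q (cSem_subset_iff.1 h' b)) hw (by omega)
  induction C with
  | hole => exact h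
  | lam p C ih => exact cSem_subset_iff.2 fun b => (cSem_subset_iff.1 ih b).lam p
  | appL q C s ih => exact app ih subset_rfl
  | appR q s C ih => exact app subset_rfl ih

theorem BTypeLe.intLe {t u : Lam} (h : BTypeLe t u) : IntLe t u :=
  fun C _ hk => hk.mono (cSem_fill_subset h C)

/-! ### From the Böhm preorder to the type preorder -/

namespace Lam

theorem tag_liftAt (t : Lam) (p : Player) (d : ℕ) :
    (t.liftAt d).tag p = (t.tag p).liftAt d := by
  induction t generalizing d with
  | var n => rfl
  | lam t ih => simp only [liftAt, tag, CTerm.liftAt, ih]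
  | app t u iht ihu => simp only [liftAt, tag, CTerm.liftAt, iht, ihu]

theorem tag_subst (t : Lam) (p : Player) (x : ℕ) (u : Lam) :
    (t.subst x u).tag p = (t.tag p).subst x (u.tag p) := by
  induction t generalizing x u with
  | var n =>
    simp only [subst, tag, CTerm.subst]
    split_ifs <;> rfl
  | lam t ih => simp only [subst, tag, CTerm.subst, ih, tag_liftAt]
  | app t u iht ihu => simp only [subst, tag, CTerm.subst, iht, ihu]

theorem tag_lSpine {t u : Lam} (h : LSpine LBetaRoot t u) (p : Player) :
    CSpine (BetaRoot 0) (t.tag p) (u.tag p) := by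
  induction h with
  | root h =>
    obtain ⟨t, u⟩ := h
    rw [tag_subst, ← silentRoot_eq]
    exact .root (.beta p _ _)
  | appL u _ ih => exact .appL p _ ih

theorem tag_lHStep {t u : Lam} (h : LHStep t u) (p : Player) :
    HeadStep 0 (t.tag p) (u.tag p) := by
  induction h with
  | spine h => exact .spine (tag_lSpine h p)
  | lam _ ih => exact .lam p ih

theorem hConv_of_typings_inst_tag {t : Lam} {p : Player} {σ : ℕ → CTerm} {L : LType}
    {w : Usage} (hw : w ∈ ((t.tag p).inst σ).typings L) : t.HConv := by
  obtain ⟨Γ, k, s⟩ := w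
  induction s generalizing t k with
  | zero =>
    refine ⟨t, .refl, fun u hu => ?_⟩
    obtain ⟨_, _, _, _, ⟨⟩⟩ :=
      (CTerm.mem_typings_headStep (CTerm.headStep_inst (tag_lHStep hu p) σ)).1 hw
  | succ s ih =>
    by_cases ht : t.LHNF
    · exact ⟨t, .refl, ht⟩
    · obtain ⟨u, hu⟩ : ∃ u, LHStep t u := by simpa [LHNF] using ht
      obtain ⟨k, _, hk, rfl, ⟨⟩⟩ :=
        (CTerm.mem_typings_headStep (CTerm.headStep_inst (tag_lHStep hu p) σ)).1 hw
      obtain ⟨v, huv, hv⟩ := ih k hk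
      exact ⟨v, .head hu huv, hv⟩

end Lam

namespace TypeLeBelow

variable {b : ℕ} {p : Player}

theorem tag_absN (n : ℕ) {t u : Lam} (h : TypeLeBelow b (t.tag p) (u.tag p)) :
    TypeLeBelow b ((Lam.absN n t).tag p) ((Lam.absN n u).tag p) := by
  induction n with
  | zero => exact h
  | succ n ih => exact ih.lam p

theorem tag_appList {t u : Lam} (h : TypeLeBelow (b + 1) (t.tag p) (u.tag p)) {ts us : List Lam}
    (hs : List.Forall₂ (fun a c => TypeLeBelow b (a.tag p) (c.tag p)) ts us) :
    TypeLeBelow (b + 1) ((t.appList ts).tag p) ((u.appList us).tag p) := by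
  induction hs generalizing t u with
  | nil => exact h
  | cons h' _ ih => exact ih (h.app p h')

end TypeLeBelow

theorem cSem_inst_tag_eq_of_lHSteps {t u : Lam} (h : LHSteps t u) (p : Player)
    (σ : ℕ → CTerm) : CSem ((t.tag p).inst σ) = CSem ((u.tag p).inst σ) := by
  induction h with
  | refl => rfl
  | tail _ h ih =>
    exact ih.trans
      (CTerm.cSem_eq_of_silent_headStep (CTerm.headStep_inst (Lam.tag_lHStep h p) σ))

theorem cSem_tag_eq_of_lHSteps {t u : Lam} (h : LHSteps t u) (p : Player) :
    CSem (t.tag p) = CSem (u.tag p) := by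
  simpa only [CTerm.inst_var] using cSem_inst_tag_eq_of_lHSteps h p .var

theorem exists_typing_le_of_lHSteps {t u : Lam} (h : LHSteps t u) {p : Player} {L : LType}
    {Γ : TEnv} {k s : ℕ} (hs : (Γ, k, s) ∈ (t.tag p).typings L) :
    ∃ s' ≤ s, (Γ, k, s') ∈ (u.tag p).typings L := by
  induction h with
  | refl => exact ⟨s, le_rfl, hs⟩
  | tail _ h ih =>
    obtain ⟨_, hle, hr⟩ := ih
    obtain ⟨_, s', hs', rfl, rfl⟩ := (CTerm.mem_typings_headStep (Lam.tag_lHStep h p)).1 hr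
    exact ⟨s', by omega, hs'⟩

theorem typeLeBelow_of_forall_bohmClause {R : Lam → Lam → Prop}
    (hR : ∀ t u, R t u → BohmClause R t u) (p : Player) (b : ℕ) {t u : Lam} (h : R t u) :
    TypeLeBelow b (t.tag p) (u.tag p) := by
  induction b generalizing t u with
  | zero => exact fun _ _ _ hb => absurd hb (Nat.not_lt_zero _)
  | succ b ih =>
    rintro L ⟨Γ, k, s⟩ hw hs
    obtain ht | ⟨n, y, ts, us, hlen, ht, hu, hsub⟩ := hR t u h
    · exact absurd (Lam.hConv_of_typings_inst_tag (σ := .var) (by rwa [CTerm.inst_var])) ht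
    obtain ⟨s', hle, hw'⟩ := exists_typing_le_of_lHSteps ht hw
    have args : List.Forall₂ (fun a c => TypeLeBelow b (a.tag p) (c.tag p)) ts us :=
      List.forall₂_iff_get.2 ⟨hlen, fun i hi hj => ih (hsub i hi hj)⟩
    obtain ⟨_, hr⟩ := ((TypeLeBelow.refl _ _).tag_appList args).tag_absN n hw'
      (lt_of_le_of_lt hle hs)
    exact CTerm.mem_cSem.1 (cSem_tag_eq_of_lHSteps hu p ▸ CTerm.mem_cSem.2 ⟨_, hr⟩)

theorem BohmLe.bTypeLe {t u : Lam} (h : BohmLe t u) : BTypeLe t u := by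
  obtain ⟨R, hR, htu⟩ := h
  exact cSem_subset_iff.2 fun b => typeLeBelow_of_forall_bohmClause hR .black b htu

/-! ### Shifting the number of interactions -/

/-- `t` has the typings of `u`, each with `g` additional interactions. -/
def SemShift (g : ℕ) (t u : CTerm) : Prop :=
  ∀ (Γ : TEnv) (k : ℕ) (L : LType),
    (Γ, k, L) ∈ CSem t ↔ ∃ r, (Γ, r, L) ∈ CSem u ∧ r + g = k

theorem mem_cSem_app {q : Player} {t u : CTerm} {Γ : TEnv} {k : ℕ} {L : LType} :
    (Γ, k, L) ∈ CSem (.app q t u) ↔ ∃ (M : List LType) (p : Player) (Γ' : TEnv) (r : ℕ),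
      (Γ', r, .arrow M p q L) ∈ CSem t ∧
      ∃ v ∈ u.multiTypings M, Γ' + v.1 = Γ ∧ r + v.2.1 + Player.gamma p q = k := by
  simp only [CTerm.mem_cSem]
  constructor
  · rintro ⟨s, hs⟩
    obtain ⟨M, p, _, ⟨⟨Γ', r, s'⟩, hv, v', hv', rfl⟩, _, rfl, ⟨⟩⟩ := Set.mem_iUnion₂.1 hs
    exact ⟨M, p, Γ', r, ⟨s', hv⟩, v', hv', (add_zero _).symm, rfl⟩
  · rintro ⟨M, p, Γ', r, ⟨s', hv⟩, v', hv', rfl, rfl⟩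
    refine ⟨s' + v'.2.2 + 1, Set.mem_iUnion₂.2
      ⟨M, p, _, Set.add_mem_add hv hv', _, rfl, ?_⟩⟩
    simp [Prod.ext_iff]

namespace SemShift

variable {g g' : ℕ} {t u v : CTerm}

theorem of_eq (h : CSem t = CSem u) : SemShift 0 t u := by
  intro Γ k L
  simp [h]

theorem of_headStep (h : HeadStep g t u) : SemShift g t u :=
  fun _ _ _ => CTerm.mem_cSem_headStep h

theorem trans (h : SemShift g t u) (h' : SemShift g' u v) : SemShift (g + g') t v := by
  intro Γ k L
  simp only [h _ _ _, h' _ _ _]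
  grind

theorem app (h : SemShift g t u) (q : Player) (a : CTerm) :
    SemShift g (.app q t a) (.app q u a) := by
  intro Γ k L
  simp only [mem_cSem_app, h _ _ _]
  grind

theorem bigStep_iff (h : SemShift g t u) {k : ℕ} :
    BigStep t k ↔ ∃ r, BigStep u r ∧ r + g = k := by
  simp only [_root_.bigStep_iff, h _ _ _]
  grind

end SemShift

/-! ### Iterated application and abstraction -/

namespace CTerm

/-- Application by player `q` to a list of arguments, the first one innermost. -/
def apps (q : Player) (t : CTerm) (as : List CTerm) : CTerm := as.foldl (.app q) t

/-- `n` abstractions by player `p` in front of a term. -/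
def lams (p : Player) : ℕ → CTerm → CTerm
  | 0, t => t
  | n + 1, t => .lam p (lams p n t)

/-- The substitution produced by feeding the arguments `as` to `as.length` abstractions: the last
argument replaces index `0`. -/
def extend (as : List CTerm) (σ : ℕ → CTerm) (n : ℕ) : CTerm :=
  if _ : n < as.length then as[as.length - 1 - n] else σ (n - as.length)

theorem apps_append (q : Player) (t : CTerm) (as bs : List CTerm) :
    apps q t (as ++ bs) = apps q (apps q t as) bs :=
  List.foldl_append

theorem inst_apps (q : Player) (t : CTerm) (as : List CTerm) (σ : ℕ → CTerm) :
    (apps q t as).inst σ = apps q (t.inst σ) (as.map fun a => a.inst σ) := by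
  induction as generalizing t with
  | nil => rfl
  | cons _ _ ih => exact ih _

theorem lams_add (p : Player) (m n : ℕ) (t : CTerm) :
    lams p (m + n) t = lams p m (lams p n t) := by
  induction m with
  | zero => rw [Nat.zero_add, lams]
  | succ m ih => rw [Nat.succ_add, lams, ih, lams]

theorem extend_of_lt {as : List CTerm} {n : ℕ} (h : n < as.length) (σ : ℕ → CTerm) :
    extend as σ n = as[as.length - 1 - n] :=
  dif_pos h

theorem extend_cons (a : CTerm) (as : List CTerm) (σ : ℕ → CTerm) :
    extend (a :: as) σ = extend as (scons a σ) := by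
  funext n
  simp only [extend, scons, List.length_cons]
  grind

theorem extend_append (as bs : List CTerm) (σ : ℕ → CTerm) :
    extend (as ++ bs) σ = extend bs (extend as σ) := by
  induction as generalizing σ with
  | nil => rfl
  | cons a as ih => rw [List.cons_append, extend_cons, ih, extend_cons]

theorem nonempty_cSem_of_apps {q : Player} {t : CTerm} {as : List CTerm}
    (h : (CSem (apps q t as)).Nonempty) : (CSem t).Nonempty := by
  induction as generalizing t with
  | nil => exact h
  | cons _ _ ih =>
    obtain ⟨⟨Γ, k, L⟩, h⟩ := ih h
    obtain ⟨_, _, _, _, ht, _⟩ := mem_cSem_app.1 h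
    exact ⟨_, ht⟩

end CTerm

open CTerm

theorem SemShift.apps {g : ℕ} {t u : CTerm} (h : SemShift g t u) (q : Player) (as : List CTerm) :
    SemShift g (apps q t as) (apps q u as) := by
  induction as generalizing t u with
  | nil => exact h
  | cons a _ ih => exact ih (h.app q a)

theorem semShift_apps_lams (p q : Player) (t : CTerm) (as : List CTerm) (σ : ℕ → CTerm) :
    SemShift (as.length * Player.gamma p q) (apps q ((lams p as.length t).inst σ) as)
      (t.inst (extend as σ)) := by
  induction as generalizing σ with
  | nil =>
    rw [List.length_nil, Nat.zero_mul]
    exact .of_eq rfl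
  | cons a as ih =>
    have h := (SemShift.of_headStep
      (.spine (.root (.beta p q ((lams p as.length t).inst (up σ)) a)))).apps q as
    rw [inst_up_subst_zero] at h
    rw [List.length_cons, Nat.succ_mul, Nat.add_comm, extend_cons]
    exact h.trans (ih _)

theorem BigStep.nonempty_cSem {t : CTerm} {k : ℕ} (h : BigStep t k) : (CSem t).Nonempty := by
  obtain ⟨_, _, _, _, h⟩ := bigStep_iff.1 h
  exact ⟨_, h⟩

theorem cSem_eq_empty_of_headStep_self {g : ℕ} {t : CTerm} (h : HeadStep g t t) :
    CSem t = ∅ := by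
  suffices ∀ s Γ k L, (Γ, k, s) ∉ t.typings L from
    Set.eq_empty_of_forall_notMem fun _ hx =>
      let ⟨s, hs⟩ := mem_cSem.1 hx
      this s _ _ _ hs
  intro s
  induction s with
  | zero =>
    intro Γ k L hs
    obtain ⟨_, _, _, _, ⟨⟩⟩ := (mem_typings_headStep h).1 hs
  | succ s ih =>
    intro Γ k L hs
    obtain ⟨_, _, hs, _, ⟨⟩⟩ := (mem_typings_headStep h).1 hs
    exact ih _ _ _ hs

/-! ### Gadgets -/

namespace CTerm

/-- `u` after `c` dummy interactions. -/
def delay : ℕ → CTerm → CTerm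
  | 0, u => u
  | c + 1, u => .app .black (.lam .white (.var 0)) (delay c u)

/-- The function collecting `N` arguments and passing them, after `c` dummy interactions, to its
last argument. -/
def tupler (N c : ℕ) : CTerm :=
  lams .white (N + 1)
    (apps .white (delay c (.var 0)) ((List.range N).map fun i => .var (N - i)))

/-- The projection to the `i`-th of `N` arguments, counted from `0`. -/
def selector (N i : ℕ) : CTerm := lams .white N (.var (N - 1 - i))

/-- The function discarding `N` arguments and returning the identity. -/
def absorber (N : ℕ) : CTerm := lams .white N (.lam .white (.var 0))

/-- The diverging term `Ω`. -/
def bigOmega : CTerm :=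
  .app .white (.lam .white (.app .white (.var 0) (.var 0)))
    (.lam .white (.app .white (.var 0) (.var 0)))

theorem inst_delay (c : ℕ) (u : CTerm) (σ : ℕ → CTerm) :
    (delay c u).inst σ = delay c (u.inst σ) := by
  induction c with
  | zero => rfl
  | succ c ih => simp only [delay, inst, ih, up]

theorem semShift_delay (c : ℕ) (u : CTerm) : SemShift c (delay c u) u := by
  induction c with
  | zero => exact .of_eq rfl
  | succ c ih =>
    have h : SemShift (1 + c) (delay (c + 1) u) u :=
      .trans (.of_headStep (.spine (.root (.beta .white .black (.var 0) _)))) ih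
    rwa [Nat.add_comm 1 c] at h

theorem semShift_apps_absorber (as : List CTerm) :
    SemShift 0 (apps .white (absorber as.length) as) (.lam .white (.var 0)) := by
  have h := semShift_apps_lams .white .white (.lam .white (.var 0)) as .var
  rwa [inst_var] at h

theorem bigStep_apps_absorber (as : List CTerm) {k : ℕ} :
    BigStep (apps .white (absorber as.length) as) k ↔ k = 0 := by
  have h : HNF (.lam .white (.var 0)) := (Normal.lam .white (.neutral (.var 0))).hnf
  simp [(semShift_apps_absorber as).bigStep_iff, h.bigStep_iff, eq_comm]

theorem semShift_apps_selector (zs : List CTerm) {i : ℕ} (hi : i < zs.length) :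
    SemShift 0 (apps .white (selector zs.length i) zs) zs[i] := by
  have h := semShift_apps_lams .white .white (.var (zs.length - 1 - i)) zs .var
  rw [inst_var, inst, extend_of_lt (by omega)] at h
  simp only [show zs.length - 1 - (zs.length - 1 - i) = i by omega] at h
  exact h

theorem not_bigStep_apps_bigOmega (as : List CTerm) (k : ℕ) :
    ¬ BigStep (apps .white bigOmega as) k := by
  have step : HeadStep 0 bigOmega bigOmega := .spine (.root (.beta .white .white _ _))
  intro h
  exact (nonempty_cSem_of_apps h.nonempty_cSem).ne_empty (cSem_eq_empty_of_headStep_self step)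

theorem semShift_apps_tupler (c : ℕ) (as bs : List CTerm) (w : CTerm) :
    SemShift (as.length + c)
      (apps .white (apps .black (tupler (as.length + bs.length) c) as) (bs ++ [w]))
      (apps .white w (as ++ bs)) := by
  set N := as.length + bs.length with hN
  set body := apps .white (delay c (.var 0)) ((List.range N).map fun i => .var (N - i))
  have collect_as := semShift_apps_lams .white .black (lams .white (bs ++ [w]).length body) as .var
  have collect_bs := semShift_apps_lams .white .white body (bs ++ [w]) (extend as .var)
  have outputs : ((List.range N).map fun i => .var (N - i)).map
      (inst · (extend (as ++ bs ++ [w]) .var)) = as ++ bs := by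
    refine List.ext_getElem (by simp [hN]) fun i hi hi' => ?_
    have hlt : N - i < (as ++ bs ++ [w]).length := by
      simp only [List.length_append, List.length_singleton]
      omega
    simp only [List.getElem_map, List.getElem_range, inst, extend_of_lt hlt]
    grind
  have last : extend (as ++ bs ++ [w]) .var 0 = w := by
    rw [extend_append]
    rfl
  rw [inst_var, ← lams_add] at collect_as
  rw [← extend_append, ← List.append_assoc, inst_apps, outputs, inst_delay, inst, last]
    at collect_bs
  have h := (collect_as.apps .white (bs ++ [w])).trans
    (collect_bs.trans ((semShift_delay _ _).apps _ _))
  rw [show as.length + (bs ++ [w]).length = N + 1 by simp [hN, Nat.add_assoc]] at h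
  rw [show tupler N c = lams .white (N + 1) body from rfl]
  simpa [Player.gamma] using h

end CTerm

/-! ### Probing head normal forms -/

/-- The head normal form `λx₁…x_binders. head args`, its head variable being a de Bruijn index. -/
structure HeadNF where
  binders : ℕ
  head : ℕ
  args : List Lam
deriving Inhabited

namespace HeadNF

/-- The λ-term denoted by a head normal form. -/
def toLam (a : HeadNF) : Lam := Lam.absN a.binders (Lam.appList (.var a.head) a.args)

/-- `a` has at most `B` abstractions and at most `B` arguments. -/
def Fits (B : ℕ) (a : HeadNF) : Prop := a.binders ≤ B ∧ a.args.length ≤ B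

/-- The number of arguments that, with those of `a` and the `B - a.binders` ones left over by its
abstractions, make up a tuple of length `2 * B`. -/
def slack (B : ℕ) (a : HeadNF) : ℕ := B + a.binders - a.args.length

end HeadNF

namespace Lam

theorem appList_concat (t : Lam) (ts : List Lam) (u : Lam) :
    t.appList (ts ++ [u]) = .app (t.appList ts) u := by
  induction ts generalizing t with
  | nil => rfl
  | cons _ _ ih => exact ih _

theorem LHNF.exists_headNF {t : Lam} (h : t.LHNF) : ∃ a : HeadNF, t = a.toLam := by
  have spine (t : Lam) : (∃ s, t = .lam s) ∨ (∃ y ts, t = appList (.var y) ts) ∨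
      ∃ u, LSpine LBetaRoot t u := by
    induction t with
    | var x => exact .inr (.inl ⟨x, [], rfl⟩)
    | lam s => exact .inl ⟨s, rfl⟩
    | app t u iht =>
      right
      obtain ⟨s, rfl⟩ | ⟨y, ts, rfl⟩ | ⟨v, hv⟩ := iht
      · exact .inr ⟨_, .root (.beta s u)⟩
      · exact .inl ⟨y, ts ++ [u], (appList_concat _ _ _).symm⟩
      · exact .inr ⟨_, .appL u hv⟩
  induction t with
  | var x => exact ⟨⟨0, x, []⟩, rfl⟩
  | lam t ih =>
    obtain ⟨a, rfl⟩ := ih fun u hu => h _ (.lam hu)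
    exact ⟨⟨a.binders + 1, a.head, a.args⟩, rfl⟩
  | app t u =>
    obtain ⟨_, ⟨⟩⟩ | ⟨y, ts, e⟩ | ⟨v, hv⟩ := spine (.app t u)
    · exact ⟨⟨0, y, ts⟩, e⟩
    · exact absurd (.spine hv) (h v)

theorem tag_absN (n : ℕ) (t : Lam) (p : Player) : (absN n t).tag p = lams p n (t.tag p) := by
  induction n with
  | zero => rfl
  | succ n ih => simp only [absN, tag, lams, ih]

theorem tag_appList (t : Lam) (ts : List Lam) (p : Player) :
    (t.appList ts).tag p = apps p (t.tag p) (ts.map fun s => s.tag p) := by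
  induction ts generalizing t with
  | nil => rfl
  | cons _ _ ih => exact ih _

end Lam

/-- The substitution of tuplers for all variables. The costs of distinct tuplers differ by multiples
of `2 * B + 1`, which exceeds the number of abstractions plus arguments of a head normal form
fitting `B`. The level `L` leaves room for `L` further variables. -/
def tuplerSubst (B L j : ℕ) : CTerm := tupler (2 * B) ((2 * B + 1) * (L + j))

/-- The tuplers to be fed to `n` abstractions at level `L`. -/
def tuplerArgs (B L n : ℕ) : List CTerm :=
  (List.range n).map fun i => tupler (2 * B) ((2 * B + 1) * (L - 1 - i))

/-- The black lifting of `t` with tuplers for its free variables. -/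
def probed (B L : ℕ) (t : Lam) : CTerm := (t.tag .black).inst (tuplerSubst B L)

theorem length_tuplerArgs (B L n : ℕ) : (tuplerArgs B L n).length = n := by simp [tuplerArgs]

theorem take_tuplerArgs (B L : ℕ) {m n : ℕ} (h : m ≤ n) :
    (tuplerArgs B L n).take m = tuplerArgs B L m := by
  rw [tuplerArgs, ← List.map_take, List.take_range, min_eq_left h, tuplerArgs]

theorem extend_tuplerArgs (B : ℕ) {L n : ℕ} (h : n ≤ L) :
    extend (tuplerArgs B L n) (tuplerSubst B L) = tuplerSubst B (L - n) := by
  funext j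
  simp only [extend, length_tuplerArgs]
  split_ifs with hj
  · simp only [tuplerArgs, List.getElem_map, List.getElem_range, tuplerSubst]
    congr 2
    omega
  · simp only [tuplerSubst]
    congr 2
    omega

namespace HeadNF

/-- The arguments passed on by the head tupler of `a` when probed with the further arguments
`pre`. -/
def probeArgs (B L : ℕ) (a : HeadNF) (pre : List CTerm) : List CTerm :=
  a.args.map (probed B (L - a.binders)) ++ ((tuplerArgs B L B).drop a.binders ++ pre)

/-- The number of interactions spent on probing `a`. -/
def probeCost (B L : ℕ) (a : HeadNF) : ℕ :=
  a.binders + a.args.length + (2 * B + 1) * (L - a.binders + a.head)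

variable {B L : ℕ} {a : HeadNF}

theorem length_probeArgs (ha : a.Fits B) {pre : List CTerm} (hpre : pre.length = a.slack B) :
    (a.probeArgs B L pre).length = 2 * B := by
  obtain ⟨hn, hk⟩ := ha
  simp only [probeArgs, List.length_append, List.length_map, List.length_drop,
    length_tuplerArgs, hpre, slack]
  omega

theorem getElem_probeArgs {pre : List CTerm} {i : ℕ} (hi : i < a.args.length)
    (hi' : i < (a.probeArgs B L pre).length) :
    (a.probeArgs B L pre)[i] = probed B (L - a.binders) a.args[i] := by
  simp [probeArgs, List.getElem_append_left, hi]

theorem semShift_binders (hL : a.binders ≤ L) :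
    SemShift a.binders (apps .white (probed B L a.toLam) (tuplerArgs B L a.binders))
      (apps .black (tuplerSubst B (L - a.binders) a.head)
        (a.args.map (probed B (L - a.binders)))) := by
  have h := semShift_apps_lams .black .white ((Lam.appList (.var a.head) a.args).tag .black)
    (tuplerArgs B L a.binders) (tuplerSubst B L)
  have spine : ((Lam.appList (.var a.head) a.args).tag .black).inst
      (tuplerSubst B (L - a.binders)) =
      apps .black (tuplerSubst B (L - a.binders) a.head)
        (a.args.map (probed B (L - a.binders))) := by
    rw [Lam.tag_appList, inst_apps, List.map_map]
    rfl
  rw [extend_tuplerArgs B hL, length_tuplerArgs, spine,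
    show Player.gamma .black .white = 1 from rfl, mul_one] at h
  rwa [probed, toLam, Lam.tag_absN]

theorem semShift_probe (ha : a.Fits B) (hL : B ≤ L) {t : Lam} (ht : LHSteps t a.toLam)
    {pre : List CTerm} (hpre : pre.length = a.slack B) (w : CTerm) (post : List CTerm) :
    SemShift (a.probeCost B L)
      (apps .white (probed B L t) (tuplerArgs B L B ++ (pre ++ w :: post)))
      (apps .white w (a.probeArgs B L pre ++ post)) := by
  set args := a.args.map (probed B (L - a.binders)) with hargs
  set rest := (tuplerArgs B L B).drop a.binders ++ pre with hrest
  have reduce : SemShift 0 (probed B L t) (probed B L a.toLam) :=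
    .of_eq (cSem_inst_tag_eq_of_lHSteps ht _ _)
  have bind := semShift_binders (B := B) (ha.1.trans hL)
  have collect := semShift_apps_tupler ((2 * B + 1) * (L - a.binders + a.head)) args rest w
  have tuple_length : args.length + rest.length = 2 * B := by
    rw [← length_probeArgs ha hpre (L := L), ← List.length_append, probeArgs]
  have split : tuplerArgs B L B ++ (pre ++ w :: post) =
      tuplerArgs B L a.binders ++ ((rest ++ [w]) ++ post) := by
    conv_lhs => rw [← List.take_append_drop a.binders (tuplerArgs B L B)]
    rw [take_tuplerArgs B L ha.1]
    simp [hrest]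
  have cost : a.probeCost B L =
      0 + a.binders + (args.length + (2 * B + 1) * (L - a.binders + a.head)) := by
    simp only [probeCost, hargs, List.length_map]
    ring
  rw [tuple_length] at collect
  rw [split, cost]
  rw [apps_append, apps_append .white _ (rest ++ [w]),
    show a.probeArgs B L pre = args ++ rest from rfl,
    apps_append .white w]
  exact ((((reduce.apps .white _).trans bind).apps .white _).trans collect).apps .white post

theorem bigStep_absorber_probeArgs (ha : a.Fits B) {pre : List CTerm}
    (hpre : pre.length = a.slack B) (post : List CTerm) {k : ℕ} :
    BigStep (apps .white (absorber (2 * B + post.length)) (a.probeArgs B L pre ++ post)) k ↔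
      k = 0 := by
  rw [← bigStep_apps_absorber (a.probeArgs B L pre ++ post), List.length_append,
    length_probeArgs ha hpre]

theorem semShift_selector_probeArgs (ha : a.Fits B) {pre : List CTerm}
    (hpre : pre.length = a.slack B) (post : List CTerm) {i : ℕ} (hi : i < a.args.length) :
    SemShift 0 (apps .white (selector (2 * B) i) (a.probeArgs B L pre ++ post))
      (apps .white (probed B (L - a.binders) a.args[i]) post) := by
  have length_eq := length_probeArgs (L := L) ha hpre
  have hi' : i < (a.probeArgs B L pre).length := by
    obtain ⟨_, hk⟩ := ha
    omega
  rw [← length_eq, apps_append, ← getElem_probeArgs hi hi']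
  exact (semShift_apps_selector _ hi').apps .white post

theorem eq_of_slack_eq_of_probeCost_eq {b : HeadNF} (ha : a.Fits B) (hb : b.Fits B) (hL : B ≤ L)
    (slack_eq : a.slack B = b.slack B) (cost_eq : a.probeCost B L = b.probeCost B L) :
    a.binders = b.binders ∧ a.head = b.head ∧ a.args.length = b.args.length := by
  obtain ⟨ha₁, ha₂⟩ := ha
  obtain ⟨hb₁, hb₂⟩ := hb
  simp only [probeCost, slack] at slack_eq cost_eq
  have sum_eq : a.binders + a.args.length = b.binders + b.args.length := by
    have h := congrArg (· % (2 * B + 1)) cost_eq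
    simp only [Nat.add_mul_mod_self_left] at h
    rwa [Nat.mod_eq_of_lt (by omega), Nat.mod_eq_of_lt (by omega)] at h
  have level_eq : L - a.binders + a.head = L - b.binders + b.head :=
    Nat.eq_of_mul_eq_mul_left (show 0 < 2 * B + 1 by omega) (by omega)
  omega

end HeadNF

/-! ### Böhm-out -/

/-- The observational preorder on probed terms: applying the probed terms to arguments, every
number of interactions observed on `t` is observed on `u`. -/
def ObsLe (B L : ℕ) (t u : Lam) : Prop :=
  ∀ (as : List CTerm) (k : ℕ),
    BigStep (apps .white (probed B L t) as) k → BigStep (apps .white (probed B L u) as) k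

namespace ObsLe

variable {B L : ℕ} {t u : Lam} {a b : HeadNF}

theorem hConv (h : ObsLe B L t u) (hL : B ≤ L) (ht : LHSteps t a.toLam) (ha : a.Fits B) :
    u.HConv := by
  have hpre : (List.replicate (a.slack B) bigOmega).length = a.slack B := List.length_replicate
  have converges := (HeadNF.semShift_probe ha hL ht hpre (absorber (2 * B)) []).bigStep_iff.2
    ⟨0, (HeadNF.bigStep_absorber_probeArgs ha hpre []).2 rfl, rfl⟩
  obtain ⟨⟨_, _, _⟩, hu⟩ := nonempty_cSem_of_apps (h _ _ converges).nonempty_cSem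
  obtain ⟨_, hs⟩ := mem_cSem.1 hu
  exact Lam.hConv_of_typings_inst_tag hs

theorem exists_bigStep (h : ObsLe B L t u) (hL : B ≤ L)
    (ht : LHSteps t a.toLam) (ha : a.Fits B) (hu : LHSteps u b.toLam) (hb : b.Fits B)
    {pre pre' post post' : List CTerm} {w w' : CTerm}
    (split : pre ++ w :: post = pre' ++ w' :: post')
    (hpre : pre.length = a.slack B) (hpre' : pre'.length = b.slack B)
    {k : ℕ} (hk : BigStep (apps .white w (a.probeArgs B L pre ++ post)) k) :
    ∃ r, BigStep (apps .white w' (b.probeArgs B L pre' ++ post')) r ∧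
      r + b.probeCost B L = k + a.probeCost B L := by
  have converges := (HeadNF.semShift_probe ha hL ht hpre w post).bigStep_iff.2 ⟨k, hk, rfl⟩
  rw [split] at converges
  exact (HeadNF.semShift_probe hb hL hu hpre' w' post').bigStep_iff.1 (h _ _ converges)

/-- If the slacks differ, the head tuplers of `a` and `b` hand their tuples to arguments in
different positions: put an absorber in the position for `a` and `Ω` in the one for `b`. -/
theorem slack_eq (h : ObsLe B L t u) (hL : B ≤ L)
    (ht : LHSteps t a.toLam) (ha : a.Fits B) (hu : LHSteps u b.toLam) (hb : b.Fits B) :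
    a.slack B = b.slack B := by
  by_contra hne
  set pre := List.replicate (a.slack B) bigOmega with hpre
  set post := List.replicate (b.slack B) bigOmega with hpost
  have length_pre : pre.length = a.slack B := List.length_replicate
  have length_post : post.length = b.slack B := List.length_replicate
  set tests := pre ++ absorber (2 * B + post.length) :: post with htests
  have hlt : b.slack B < tests.length := by
    simp only [htests, List.length_append, List.length_cons]
    omega
  have omega_at : tests[b.slack B] = bigOmega := by
    simp only [htests, hpre, hpost]
    grind
  have split : tests = tests.take (b.slack B) ++ bigOmega :: tests.drop (b.slack B + 1) := by
    rw [← omega_at, List.cons_getElem_drop_succ, List.take_append_drop]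
  obtain ⟨r, hr, _⟩ := h.exists_bigStep hL ht ha hu hb split length_pre
    (List.length_take_of_le hlt.le)
    ((HeadNF.bigStep_absorber_probeArgs ha length_pre post).2 rfl)
  exact not_bigStep_apps_bigOmega _ _ hr

theorem probeCost_eq (h : ObsLe B L t u) (hL : B ≤ L)
    (ht : LHSteps t a.toLam) (ha : a.Fits B) (hu : LHSteps u b.toLam) (hb : b.Fits B) :
    a.probeCost B L = b.probeCost B L := by
  have hpre : (List.replicate (a.slack B) bigOmega).length = a.slack B := List.length_replicate
  have hpre' := hpre.trans (h.slack_eq hL ht ha hu hb)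
  obtain ⟨r, hr, cost_eq⟩ := h.exists_bigStep hL ht ha hu hb rfl hpre hpre'
    ((HeadNF.bigStep_absorber_probeArgs ha hpre []).2 rfl)
  obtain rfl : r = 0 := (HeadNF.bigStep_absorber_probeArgs hb hpre' []).1 hr
  omega

theorem forall₂_args (h : ObsLe B L t u) (hL : B ≤ L)
    (ht : LHSteps t a.toLam) (ha : a.Fits B) (hu : LHSteps u b.toLam) (hb : b.Fits B) :
    List.Forall₂ (ObsLe B (L - a.binders)) a.args b.args := by
  have cost_eq := h.probeCost_eq hL ht ha hu hb
  have slack_eq := h.slack_eq hL ht ha hu hb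
  obtain ⟨binders_eq, _, length_eq⟩ :=
    HeadNF.eq_of_slack_eq_of_probeCost_eq ha hb hL slack_eq cost_eq
  have hpre : (List.replicate (a.slack B) bigOmega).length = a.slack B := List.length_replicate
  have hpre' := hpre.trans slack_eq
  refine List.forall₂_iff_get.2 ⟨length_eq, fun i hi hi' as k hk => ?_⟩
  have ha_select := HeadNF.semShift_selector_probeArgs (L := L) ha hpre as hi
  have hb_select := HeadNF.semShift_selector_probeArgs (L := L) hb hpre' as hi'
  obtain ⟨r, hr, cost_eq'⟩ :=
    h.exists_bigStep hL ht ha hu hb rfl hpre hpre' (ha_select.bigStep_iff.2 ⟨k, hk, rfl⟩)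
  obtain ⟨r', hr', rfl⟩ := hb_select.bigStep_iff.1 hr
  obtain rfl : r' = k := by omega
  rwa [← binders_eq] at hr'

end ObsLe

/-! ### Approximants of the Böhm preorder -/

namespace Lam

/-- A head normal form of `t`, and junk if `t` has none. -/
noncomputable def headForm (t : Lam) : HeadNF := Classical.epsilon fun a => LHSteps t a.toLam

theorem HConv.lHSteps_headForm {t : Lam} (h : t.HConv) : LHSteps t t.headForm.toLam := by
  obtain ⟨v, hv, hnf⟩ := h
  obtain ⟨a, rfl⟩ := hnf.exists_headNF
  exact Classical.epsilon_spec (p := fun a : HeadNF => LHSteps t a.toLam) ⟨a, hv⟩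

/-- The head normal forms met in the Böhm tree of `t` down to depth `d` fit `B`. -/
def FitsUpTo (B : ℕ) : ℕ → Lam → Prop
  | 0, _ => True
  | d + 1, t => t.headForm.Fits B ∧ ∀ s ∈ t.headForm.args, FitsUpTo B d s

theorem eventually_fitsUpTo (d : ℕ) (t : Lam) : ∀ᶠ B in Filter.atTop, FitsUpTo B d t := by
  induction d generalizing t with
  | zero => exact .of_forall fun _ => trivial
  | succ d ih =>
    exact ((Filter.eventually_ge_atTop _).and (Filter.eventually_ge_atTop _)).and
      ((Filter.eventually_all_finite (List.finite_toSet _)).2 fun s _ => ih s)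

end Lam

/-- The approximant of the Böhm preorder comparing Böhm trees down to depth `d`. -/
def BohmLeUpTo : ℕ → Lam → Lam → Prop
  | 0, _, _ => True
  | d + 1, t, u => t.HConv → u.HConv ∧ t.headForm.binders = u.headForm.binders ∧
      t.headForm.head = u.headForm.head ∧
      List.Forall₂ (BohmLeUpTo d) t.headForm.args u.headForm.args

theorem bohmLe_of_forall_bohmLeUpTo {t u : Lam} (h : ∀ d, BohmLeUpTo d t u) : BohmLe t u := by
  refine ⟨fun t u => ∀ d, BohmLeUpTo d t u, fun t u htu => ?_, h⟩
  by_cases ht : t.HConv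
  · obtain ⟨hu, binders_eq, head_eq, args⟩ := htu 1 ht
    refine .inr ⟨_, _, _, _, args.length_eq, ht.lHSteps_headForm, ?_,
      fun i hi hi' d => (htu (d + 1) ht).2.2.2.get hi hi'⟩
    rw [binders_eq, head_eq]
    exact hu.lHSteps_headForm
  · exact .inl ht

theorem ObsLe.bohmLeUpTo {B L d : ℕ} {t u : Lam} (h : ObsLe B L t u) (hL : d * B ≤ L)
    (ht : t.FitsUpTo B d) (hu : u.FitsUpTo B d) : BohmLeUpTo d t u := by
  induction d generalizing L t u with
  | zero => trivial
  | succ d ih =>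
    intro t_conv
    obtain ⟨ht, ht_args⟩ := ht
    obtain ⟨hu, hu_args⟩ := hu
    rw [Nat.succ_mul] at hL
    have hBL : B ≤ L := (Nat.le_add_left _ _).trans hL
    have t_steps := t_conv.lHSteps_headForm
    have u_conv := h.hConv hBL t_steps ht
    have u_steps := u_conv.lHSteps_headForm
    obtain ⟨binders_eq, head_eq, _⟩ := HeadNF.eq_of_slack_eq_of_probeCost_eq ht hu hBL
      (h.slack_eq hBL t_steps ht u_steps hu) (h.probeCost_eq hBL t_steps ht u_steps hu)
    have args := List.forall₂_iff_get.1 (h.forall₂_args hBL t_steps ht u_steps hu)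
    have hL' : d * B ≤ L - t.headForm.binders := by
      obtain ⟨_, _⟩ := ht
      omega
    exact ⟨u_conv, binders_eq, head_eq, List.forall₂_iff_get.2 ⟨args.1, fun i hi hi' =>
      ih (args.2 i hi hi') hL' (ht_args _ (List.get_mem _ _)) (hu_args _ (List.get_mem _ _))⟩⟩

/-! ### From contexts to observations -/

theorem exists_fill_eq_apps_lams (p q : Player) (n : ℕ) (as : List CTerm) :
    ∃ C : CCtx, ∀ t, C.fill t = apps q (lams p n t) as := by
  induction as using List.reverseRecOn with
  | nil =>
    induction n with
    | zero => exact ⟨.hole, fun _ => rfl⟩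
    | succ n ih =>
      obtain ⟨C, hC⟩ := ih
      exact ⟨.lam p C, fun t => congrArg (CTerm.lam p) (hC t)⟩
  | append_singleton as a ih =>
    obtain ⟨C, hC⟩ := ih
    refine ⟨.appL q C a, fun t => ?_⟩
    rw [apps_append, ← hC]
    rfl

theorem semShift_close (B L : ℕ) {n : ℕ} {t : Lam} (hn : (t.tag .black).freeBound ≤ n)
    (as : List CTerm) :
    SemShift 0 (apps .white (lams .white n (t.tag .black)) (tuplerArgs B (L + n) n ++ as))
      (apps .white (probed B L t) as) := by
  have h := semShift_apps_lams .white .white (t.tag .black) (tuplerArgs B (L + n) n) .var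
  have closed : (t.tag .black).inst (extend (tuplerArgs B (L + n) n) .var) = probed B L t := by
    rw [probed, ← Nat.add_sub_cancel L n, ← extend_tuplerArgs B (Nat.le_add_left n L),
      Nat.add_sub_cancel]
    refine inst_congr _ fun i hi => ?_
    have hi' : i < (tuplerArgs B (L + n) n).length := by
      rw [length_tuplerArgs]
      omega
    rw [extend_of_lt hi', extend_of_lt hi']
  rw [inst_var, closed, length_tuplerArgs] at h
  rw [apps_append]
  exact h.apps .white as

theorem IntLe.obsLe {t u : Lam} (h : IntLe t u) (B L : ℕ) : ObsLe B L t u := by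
  intro as k hk
  set n := max (t.tag .black).freeBound (u.tag .black).freeBound
  obtain ⟨C, hC⟩ := exists_fill_eq_apps_lams .white .white n (tuplerArgs B (L + n) n ++ as)
  have ht := hC (t.tag .black) ▸ semShift_close B L (le_max_left _ _) as
  have hu := hC (u.tag .black) ▸ semShift_close B L (le_max_right _ _) as
  obtain ⟨r, hr, rfl⟩ := hu.bigStep_iff.1 (h C k (ht.bigStep_iff.2 ⟨k, hk, rfl⟩))
  exact hr

theorem IntLe.bohmLe {t u : Lam} (h : IntLe t u) : BohmLe t u := by
  refine bohmLe_of_forall_bohmLeUpTo fun d => ?_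
  obtain ⟨B, ht, hu⟩ := ((t.eventually_fitsUpTo d).and (u.eventually_fitsUpTo d)).exists
  exact (h.obsLe B (d * B)).bohmLeUpTo le_rfl ht hu

/-- Main theorem: the Böhm preorder, the black type preorder and the interaction
preorder coincide; consequently the induced λ-theories coincide. -/
theorem bohm_type_interaction_coincide :
    (∀ t u : Lam, (BohmLe t u ↔ BTypeLe t u) ∧ (BTypeLe t u ↔ IntLe t u)) ∧
    (∀ t u : Lam,
      ((BohmLe t u ∧ BohmLe u t) ↔ (BTypeLe t u ∧ BTypeLe u t)) ∧
      ((BTypeLe t u ∧ BTypeLe u t) ↔ IntEq t u)) := by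
  have bohm_iff_type (t u : Lam) : BohmLe t u ↔ BTypeLe t u :=
    ⟨BohmLe.bTypeLe, fun h => h.intLe.bohmLe⟩
  have type_iff_int (t u : Lam) : BTypeLe t u ↔ IntLe t u :=
    ⟨BTypeLe.intLe, fun h => h.bohmLe.bTypeLe⟩
  exact ⟨fun t u => ⟨bohm_iff_type t u, type_iff_int t u⟩, fun t u =>
    ⟨and_congr (bohm_iff_type t u) (bohm_iff_type u t),
      and_congr (type_iff_int t u) (type_iff_int u t)⟩⟩
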